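/- Let n ≥ 2, d ∈ ℝ and g̃ ∈ S^{d−1}_{1,0}(ℝ^{n−1}×ℝ^{n−1}, 𝒮(ℝ̄²₊₊)). Then there exists g̃₁ ∈ S^{d−1}_{1,0}(ℝ^{n−1}×ℝ^{n−1}, 𝒮(ℝ̄²₊₊)) such that for all u, v ∈ 𝒮(ℝⁿ): ∫_{ℝⁿ₊} (OPG(g̃)u)(x) · conj(v(x)) dx = ∫_{ℝⁿ₊} u(x) · conj((OPG(g̃₁)v)(x)) dx. (The adjoint of a class-0 singular Green operator of order d is again a class-0 singular Green operator of order d.) -/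

import Mathlib

open MeasureTheory Filter Complex
open scoped ENNReal NNReal Real BigOperators Topology

noncomputable section

/-- `ℝ^m`, with its (sup-normed) product structure; the Lebesgue measure is the
product measure. -/
abbrev Eu (m : ℕ) : Type := Fin m → ℝ

/-- Tempered distributions on `ℝ^m`. -/
abbrev TD (m : ℕ) := SchwartzMap (Eu m) ℂ →L[ℂ] ℂ

/-- The dot product `x · ξ = ∑ xᵢ ξᵢ`. -/
def dotp {m : ℕ} (x ξ : Eu m) : ℝ := ∑ i, x i * ξ i

/-- The euclidean norm `|x|`. -/
def eun {m : ℕ} (x : Eu m) : ℝ := Real.sqrt (∑ i, x i ^ 2)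

/-- The japanese bracket `⟨ξ⟩ = (1 + |ξ|²)^(1/2)`. -/
def jap {m : ℕ} (ξ : Eu m) : ℝ := Real.sqrt (1 + ∑ i, ξ i ^ 2)

/-- The Fourier transform `ℱf(ξ) = ∫ e^{-i x·ξ} f(x) dx` (paper convention). -/
def pF {m : ℕ} (f : Eu m → ℂ) (ξ : Eu m) : ℂ :=
  ∫ x : Eu m, Complex.exp (-(Complex.I * (dotp x ξ : ℂ))) * f x

/-- The inverse Fourier transform `(2π)^{-m} ∫ e^{i x·ξ} f(ξ) dξ`. -/
def pFinv {m : ℕ} (f : Eu m → ℂ) (x : Eu m) : ℂ :=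
  (((2 * Real.pi) ^ m : ℝ)⁻¹) • ∫ ξ : Eu m, Complex.exp (Complex.I * (dotp x ξ : ℂ)) * f ξ

/-- One-dimensional Fourier transform. -/
def pF1 (f : ℝ → ℂ) (τ : ℝ) : ℂ :=
  ∫ t : ℝ, Complex.exp (-(Complex.I * ((t * τ : ℝ) : ℂ))) * f t

/-- One-dimensional inverse Fourier transform. -/
def pFinv1 (f : ℝ → ℂ) (t : ℝ) : ℂ :=
  ((2 * Real.pi)⁻¹ : ℝ) • ∫ τ : ℝ, Complex.exp (Complex.I * ((t * τ : ℝ) : ℂ)) * f τ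

/-- `ℓ_q`-norm (`0 < q ≤ ∞`) of a sequence of extended nonnegative reals. -/
def ellqNorm (q : ℝ≥0∞) (b : ℕ → ℝ≥0∞) : ℝ≥0∞ :=
  if q = ∞ then ⨆ j, b j else (∑' j, b j ^ q.toReal) ^ (1 / q.toReal)

/-- The weight `2^{s j}` as an extended nonnegative real. -/
def tw (s : ℝ) (j : ℕ) : ℝ≥0∞ := ENNReal.ofReal ((2 : ℝ) ^ (s * (j : ℝ)))

/-- `1/p ∈ ℝ` for `p ∈ (0,∞]`. -/
def iv (p : ℝ≥0∞) : ℝ := p⁻¹.toReal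

/-- An admissible Littlewood–Paley generating function `Ψ`. -/
def GoodPsi (Ψ : ℝ → ℝ) : Prop :=
  ContDiff ℝ (⊤ : ℕ∞) Ψ ∧ (∀ t : ℝ, t ≤ 11 / 10 → Ψ t = 1) ∧ (∀ t : ℝ, 13 / 10 ≤ t → Ψ t = 0)

/-- The `j`-th Littlewood–Paley symbol `Φ_j(ξ) = Ψ(2^{-j}|ξ|) − Ψ(2^{1-j}|ξ|)` (with
`Ψ_{-1} = 0`). -/
def LPsym (Ψ : ℝ → ℝ) {m : ℕ} (j : ℕ) (ξ : Eu m) : ℝ :=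
  Ψ ((2 : ℝ) ^ (-(j : ℝ)) * eun ξ) - (if j = 0 then 0 else Ψ ((2 : ℝ) ^ (1 - (j : ℝ)) * eun ξ))

/-- `Φs` is the Littlewood–Paley partition of unity built from `Ψ`, realised as a family
of Schwartz functions. -/
def IsLP (Ψ : ℝ → ℝ) {m : ℕ} (Φs : ℕ → SchwartzMap (Eu m) ℂ) : Prop :=
  ∀ j ξ, Φs j ξ = (LPsym Ψ j ξ : ℂ)

/-- The tempered distribution `T` is represented by the function `g`. -/
def Represents {m : ℕ} (T : TD m) (g : Eu m → ℂ) : Prop :=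
  ∀ φ : SchwartzMap (Eu m) ℂ, T φ = ∫ x, g x * φ x

/-- `g` is (the continuous function representing) the Littlewood–Paley piece
`ℱ^{-1}(Φ_j ℱu)` of the tempered distribution `u`:  for every Schwartz `φ`, writing
`ψ = ℱ^{-1}φ` and `χ = ℱ(Φ_j ψ)` (as Schwartz functions), one has `⟨u, χ⟩ = ∫ g φ`. -/
def IsLPpiece {m : ℕ} (Φj : SchwartzMap (Eu m) ℂ) (u : TD m) (g : Eu m → ℂ) : Prop :=
  Continuous g ∧
    ∀ φ ψ χ : SchwartzMap (Eu m) ℂ,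
      (∀ x, ψ x = pFinv (fun y => φ y) x) →
      (∀ ξ, χ ξ = pF (fun η => Φj η * ψ η) ξ) →
      u χ = ∫ x, g x * φ x

open Classical in
/-- The Littlewood–Paley piece `ℱ^{-1}(Φ_j ℱu)` of a tempered distribution, as a
function (via choice of the continuous representative). -/
def LPfun {m : ℕ} (Φj : SchwartzMap (Eu m) ℂ) (u : TD m) : Eu m → ℂ :=
  if h : ∃ g, IsLPpiece Φj u g then h.choose else 0

/-- Besov quasi-norm of a sequence of (Littlewood–Paley) functions. -/
def besovNormSeq {m : ℕ} (s : ℝ) (p q : ℝ≥0∞) (g : ℕ → Eu m → ℂ) : ℝ≥0∞ :=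
  ellqNorm q fun j => tw s j * eLpNorm (g j) p volume

/-- Triebel–Lizorkin quasi-norm of a sequence of (Littlewood–Paley) functions. -/
def tlNormSeq {m : ℕ} (s : ℝ) (p q : ℝ≥0∞) (g : ℕ → Eu m → ℂ) : ℝ≥0∞ :=
  (∫⁻ x, (ellqNorm q fun j => tw s j * (‖g j x‖₊ : ℝ≥0∞)) ^ p.toReal ∂volume) ^ (1 / p.toReal)

/-- Besov quasi-norm `‖u‖_{B^s_{p,q}}` of a tempered distribution. -/
def besovNormD {m : ℕ} (Φs : ℕ → SchwartzMap (Eu m) ℂ) (s : ℝ) (p q : ℝ≥0∞) (u : TD m) :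
    ℝ≥0∞ :=
  besovNormSeq s p q fun j => LPfun (Φs j) u

/-- Triebel–Lizorkin quasi-norm `‖u‖_{F^s_{p,q}}` of a tempered distribution. -/
def tlNormD {m : ℕ} (Φs : ℕ → SchwartzMap (Eu m) ℂ) (s : ℝ) (p q : ℝ≥0∞) (u : TD m) :
    ℝ≥0∞ :=
  tlNormSeq s p q fun j => LPfun (Φs j) u

/-- The open upper half-space `ℝ^{m+1}_+ = {x : x_n > 0}`. -/
def upperH (m : ℕ) : Set (Eu (m + 1)) := {x | 0 < x (Fin.last m)}

/-- `w ∈ 𝒮'(ℝ^{m+1})` agrees with the function `f` on the open half-space `ℝ^{m+1}_+`. -/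
def RestrictsTo {m : ℕ} (w : TD (m + 1)) (f : Eu (m + 1) → ℂ) : Prop :=
  ∀ φ : SchwartzMap (Eu (m + 1)) ℂ, HasCompactSupport (φ : Eu (m + 1) → ℂ) →
    tsupport (φ : Eu (m + 1) → ℂ) ⊆ upperH m → w φ = ∫ x, f x * φ x

/-- Two tempered distributions agree on the open upper half-space. -/
def AgreeOnUpper {m : ℕ} (w v : TD (m + 1)) : Prop :=
  ∀ φ : SchwartzMap (Eu (m + 1)) ℂ, HasCompactSupport (φ : Eu (m + 1) → ℂ) →
    tsupport (φ : Eu (m + 1) → ℂ) ⊆ upperH m → w φ = v φ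

/-- `‖f‖_{B^s_{p,q}(ℝ̄^{m+1}_+)}`: infimum of the Besov norms of all distributional
extensions of (the restriction to the half-space of) the function `f`. -/
def bHalfNormF {m : ℕ} (Φs : ℕ → SchwartzMap (Eu (m + 1)) ℂ) (s : ℝ) (p q : ℝ≥0∞)
    (f : Eu (m + 1) → ℂ) : ℝ≥0∞ :=
  ⨅ (w : TD (m + 1)) (_ : RestrictsTo w f), besovNormD Φs s p q w

/-- `‖f‖_{F^s_{p,q}(ℝ̄^{m+1}_+)}`. -/
def tlHalfNormF {m : ℕ} (Φs : ℕ → SchwartzMap (Eu (m + 1)) ℂ) (s : ℝ) (p q : ℝ≥0∞)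
    (f : Eu (m + 1) → ℂ) : ℝ≥0∞ :=
  ⨅ (w : TD (m + 1)) (_ : RestrictsTo w f), tlNormD Φs s p q w

/-- `‖v‖_{B^s_{p,q}(ℝ̄^{m+1}_+)}` for a tempered distribution `v`. -/
def bHalfNormD {m : ℕ} (Φs : ℕ → SchwartzMap (Eu (m + 1)) ℂ) (s : ℝ) (p q : ℝ≥0∞)
    (v : TD (m + 1)) : ℝ≥0∞ :=
  ⨅ (w : TD (m + 1)) (_ : AgreeOnUpper w v), besovNormD Φs s p q w

/-- `‖v‖_{F^s_{p,q}(ℝ̄^{m+1}_+)}` for a tempered distribution `v`. -/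
def tlHalfNormD {m : ℕ} (Φs : ℕ → SchwartzMap (Eu (m + 1)) ℂ) (s : ℝ) (p q : ℝ≥0∞)
    (v : TD (m + 1)) : ℝ≥0∞ :=
  ⨅ (w : TD (m + 1)) (_ : AgreeOnUpper w v), tlNormD Φs s p q w

/-- Partial derivative in the `i`-th coordinate. -/
def cDeriv {k : ℕ} (i : Fin k) (f : Eu k → ℂ) : Eu k → ℂ :=
  fun x => deriv (fun t => f (Function.update x i t)) (x i)

/-- Iterated partial derivative `∂^α` for a multi-index `α`. -/
def mDeriv {k : ℕ} (α : Fin k → ℕ) (f : Eu k → ℂ) : Eu k → ℂ :=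
  (List.finRange k).foldr (fun i g => (cDeriv i)^[α i] g) f

/-- Length `|α| = ∑ αᵢ` of a multi-index. -/
def degS {k : ℕ} (α : Fin k → ℕ) : ℕ := ∑ i, α i

/-- `D^α = (-i)^{|α|} ∂^α`. -/
def mD {k : ℕ} (α : Fin k → ℕ) (f : Eu k → ℂ) : Eu k → ℂ :=
  fun x => (-Complex.I) ^ degS α * mDeriv α f x

/-- Monomial `x^α`. -/
def monom {k : ℕ} (α : Fin k → ℕ) (x : Eu k) : ℂ := ∏ i, (x i : ℂ) ^ α i

/-- `D^β_x D^α_ξ a(x, ξ)` for a symbol `a`. -/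
def symD {k : ℕ} (α β : Fin k → ℕ) (a : Eu k → Eu k → ℂ) (x ξ : Eu k) : ℂ :=
  mD β (fun y => mD α (a y) ξ) x

/-- The Hörmander class `S^d_{1,0}(ℝ^k × ℝ^k)` of uniformly estimated symbols. -/
def IsSymbol {k : ℕ} (d : ℝ) (a : Eu k → Eu k → ℂ) : Prop :=
  ContDiff ℝ (⊤ : ℕ∞) (fun z : Eu k × Eu k => a z.1 z.2) ∧
    ∀ α β : Fin k → ℕ, ∃ C : ℝ, ∀ x ξ, ‖symD α β a x ξ‖ ≤ C * jap ξ ^ (d - (degS α : ℝ))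

/-- `k` is the inverse Fourier transform in `ξ_n` of `ξ_n ↦ D^α_ξ D^β_x a(x',0,ξ',ξ_n)`
away from `z_n = 0`, smooth there. -/
def TCkernel {m : ℕ} (a : Eu (m + 1) → Eu (m + 1) → ℂ) (α β : Fin (m + 1) → ℕ)
    (k : Eu m → ℝ → Eu m → ℂ) : Prop :=
  (∀ x' ξ', ContDiffOn ℝ (⊤ : ℕ∞) (fun t => k x' t ξ') {t : ℝ | t ≠ 0}) ∧
    ∀ (x' ξ' : Eu m) (φ : ℝ → ℂ), ContDiff ℝ (⊤ : ℕ∞) φ → HasCompactSupport φ →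
      tsupport φ ⊆ {t : ℝ | t ≠ 0} →
      (∫ τ : ℝ, symD α β a (Fin.snoc x' 0) (Fin.snoc ξ' τ) * pFinv1 φ τ) =
        ∫ t : ℝ, k x' t ξ' * φ t

/-- The uniform two-sided transmission condition at `x_n = 0`. -/
def HasUTTC {m : ℕ} (a : Eu (m + 1) → Eu (m + 1) → ℂ) : Prop :=
  ∀ α β : Fin (m + 1) → ℕ, ∃ k : Eu m → ℝ → Eu m → ℂ, TCkernel a α β k ∧
    ∀ (l mm : ℕ) (ξ' : Eu m), ∃ C : ℝ, ∀ (x' : Eu m) (t : ℝ), t ≠ 0 →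
      ‖(t : ℂ) ^ l * iteratedDeriv mm (fun u => k x' u ξ') t‖ ≤ C

/-- `t^l D^m_t D^{α'}_{ξ'} D^{β'}_{x'} k̃(x', t, ξ')`, the `t`-derivatives being taken
within `[0,∞)`. -/
def pkDeriv {m : ℕ} (α' β' : Fin m → ℕ) (l mm : ℕ) (k : Eu m → ℝ → Eu m → ℂ)
    (x' : Eu m) (t : ℝ) (ξ' : Eu m) : ℂ :=
  (t : ℂ) ^ l *
    iteratedDerivWithin mm
      (fun u => mDeriv β' (fun y => mDeriv α' (fun η => k y u η) ξ') x') (Set.Ici 0) t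

/-- The seminorm `sup ⟨ξ'⟩^{-(μ+1-|α'|-l+m)} |t^l D^m_t D^{α'}_{ξ'} D^{β'}_{x'} k̃|` of a
Poisson/trace symbol-kernel. -/
def pkSemiE {m : ℕ} (μ : ℝ) (α' β' : Fin m → ℕ) (l mm : ℕ) (k : Eu m → ℝ → Eu m → ℂ) :
    ℝ≥0∞ :=
  ⨆ (x' : Eu m) (ξ' : Eu m) (t : Set.Ici (0 : ℝ)),
    ENNReal.ofReal
      (jap ξ' ^ (-(μ + 1 - (degS α' : ℝ) - (l : ℝ) + (mm : ℝ))) *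
        ‖pkDeriv α' β' l mm k x' t ξ'‖)

/-- Membership in the symbol-kernel class `S^μ_{1,0}(ℝ^m × ℝ^m, 𝒮(ℝ̄₊))`. -/
def InPK {m : ℕ} (μ : ℝ) (k : Eu m → ℝ → Eu m → ℂ) : Prop :=
  ContDiffOn ℝ (⊤ : ℕ∞) (fun z : (Eu m × ℝ) × Eu m => k z.1.1 z.1.2 z.2) {z | 0 ≤ z.1.2} ∧
    ∀ (α' β' : Fin m → ℕ) (l mm : ℕ), pkSemiE μ α' β' l mm k ≠ ∞

/-- `‖k̃‖_{(N)}`: maximum of the symbol-kernel seminorms over all indices `≤ N`. -/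
def pkNormN {m : ℕ} (μ : ℝ) (N : ℕ) (k : Eu m → ℝ → Eu m → ℂ) : ℝ≥0∞ :=
  ⨆ (α' : Fin m → ℕ) (_ : degS α' ≤ N) (β' : Fin m → ℕ) (_ : degS β' ≤ N)
    (l : ℕ) (_ : l ≤ N) (mm : ℕ) (_ : mm ≤ N), pkSemiE μ α' β' l mm k

/-- `x_n^l D^m_{x_n} y_n^{l'} D^{m'}_{y_n} D^{α'}_{ξ'} D^{β'}_{x'} g̃`, the normal
derivatives being taken within `[0,∞)`. -/
def sgDeriv {m : ℕ} (α' β' : Fin m → ℕ) (l mm l' mm' : ℕ)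
    (g : Eu m → ℝ → ℝ → Eu m → ℂ) (x' : Eu m) (s t : ℝ) (ξ' : Eu m) : ℂ :=
  (s : ℂ) ^ l * (t : ℂ) ^ l' *
    iteratedDerivWithin mm
      (fun u =>
        iteratedDerivWithin mm'
          (fun v => mDeriv β' (fun y => mDeriv α' (fun η => g y u v η) ξ') x')
          (Set.Ici 0) t)
      (Set.Ici 0) s

/-- Singular Green symbol-kernel seminorm. -/
def sgSemiE {m : ℕ} (d : ℝ) (α' β' : Fin m → ℕ) (l mm l' mm' : ℕ)
    (g : Eu m → ℝ → ℝ → Eu m → ℂ) : ℝ≥0∞ :=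
  ⨆ (x' : Eu m) (ξ' : Eu m) (s : Set.Ici (0 : ℝ)) (t : Set.Ici (0 : ℝ)),
    ENNReal.ofReal
      (jap ξ' ^
          (-(d + 1 - (degS α' : ℝ) - (l : ℝ) + (mm : ℝ) - (l' : ℝ) + (mm' : ℝ))) *
        ‖sgDeriv α' β' l mm l' mm' g x' s t ξ'‖)

/-- Membership in the singular Green symbol-kernel class
`S^{d-1}_{1,0}(ℝ^m × ℝ^m, 𝒮(ℝ̄²₊₊))` (for operators of order `d`). -/
def InSG {m : ℕ} (d : ℝ) (g : Eu m → ℝ → ℝ → Eu m → ℂ) : Prop :=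
  ContDiffOn ℝ (⊤ : ℕ∞) (fun z : ((Eu m × ℝ) × ℝ) × Eu m => g z.1.1.1 z.1.1.2 z.1.2 z.2)
      {z | 0 ≤ z.1.1.2 ∧ 0 ≤ z.1.2} ∧
    ∀ (α' β' : Fin m → ℕ) (l mm l' mm' : ℕ), sgSemiE d α' β' l mm l' mm' g ≠ ∞

/-- `‖g̃‖_{(N)}`. -/
def sgNormN {m : ℕ} (d : ℝ) (N : ℕ) (g : Eu m → ℝ → ℝ → Eu m → ℂ) : ℝ≥0∞ :=
  ⨆ (α' : Fin m → ℕ) (_ : degS α' ≤ N) (β' : Fin m → ℕ) (_ : degS β' ≤ N)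
    (l : ℕ) (_ : l ≤ N) (mm : ℕ) (_ : mm ≤ N) (l' : ℕ) (_ : l' ≤ N) (mm' : ℕ)
    (_ : mm' ≤ N), sgSemiE d α' β' l mm l' mm' g

/-- The Poisson operator `OPK(k̃)v(x', x_n) = (2π)^{1-n} ∫ e^{i x'·ξ'} k̃(x',x_n,ξ') ℱv(ξ') dξ'`. -/
def OPK {m : ℕ} (k : Eu m → ℝ → Eu m → ℂ) (v : Eu m → ℂ) : Eu (m + 1) → ℂ :=
  fun x =>
    (((2 * Real.pi) ^ m : ℝ)⁻¹) •
      ∫ ξ' : Eu m,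
        Complex.exp (Complex.I * (dotp (Fin.init x) ξ' : ℂ)) *
          (k (Fin.init x) (x (Fin.last m)) ξ' * pF v ξ')

/-- The partial Fourier transform `ú(ξ', y_n)` of `u(y', y_n)` in `y'`. -/
def hatu {m : ℕ} (u : Eu (m + 1) → ℂ) (ξ' : Eu m) (t : ℝ) : ℂ :=
  ∫ y' : Eu m, Complex.exp (-(Complex.I * (dotp y' ξ' : ℂ))) * u (Fin.snoc y' t)

/-- The class-0 trace operator
`OPT(t̃)u(x') = (2π)^{1-n} ∫∫ e^{i x'·ξ'} t̃(x',y_n,ξ') ú(ξ',y_n) dy_n dξ'`. -/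
def OPT {m : ℕ} (tk : Eu m → ℝ → Eu m → ℂ) (u : Eu (m + 1) → ℂ) : Eu m → ℂ :=
  fun x' =>
    (((2 * Real.pi) ^ m : ℝ)⁻¹) •
      ∫ ξ' : Eu m, ∫ t in Set.Ioi (0 : ℝ),
        Complex.exp (Complex.I * (dotp x' ξ' : ℂ)) * (tk x' t ξ' * hatu u ξ' t)

/-- The class-0 singular Green operator
`OPG(g̃)u(x',x_n) = (2π)^{1-n} ∫∫ e^{i x'·ξ'} g̃(x',x_n,y_n,ξ') ú(ξ',y_n) dy_n dξ'`. -/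
def OPG {m : ℕ} (g : Eu m → ℝ → ℝ → Eu m → ℂ) (u : Eu (m + 1) → ℂ) : Eu (m + 1) → ℂ :=
  fun x =>
    (((2 * Real.pi) ^ m : ℝ)⁻¹) •
      ∫ ξ' : Eu m, ∫ t in Set.Ioi (0 : ℝ),
        Complex.exp (Complex.I * (dotp (Fin.init x) ξ' : ℂ)) *
          (g (Fin.init x) (x (Fin.last m)) t ξ' * hatu u ξ' t)

/-- Half-space multi-index derivative: the `x_n`-derivatives are taken within `[0,∞)`,
the tangential ones in the full space. -/
def hDeriv {m : ℕ} (β : Fin (m + 1) → ℕ) (f : Eu (m + 1) → ℂ) (x : Eu (m + 1)) : ℂ :=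
  iteratedDerivWithin (β (Fin.last m))
    (fun t =>
      mDeriv (fun i : Fin m => β i.castSucc) (fun y : Eu m => f (Fin.snoc y t))
        (Fin.init x))
    (Set.Ici 0) (x (Fin.last m))

/-- The Schwartz seminorm `‖u‖_{𝒮,N} = max_{|γ|,|δ| ≤ N} sup |y^γ D^δ u|`. -/
def swSemi {k : ℕ} (N : ℕ) (u : Eu k → ℂ) : ℝ≥0∞ :=
  ⨆ (γ : Fin k → ℕ) (_ : degS γ ≤ N) (δ : Fin k → ℕ) (_ : degS δ ≤ N) (y : Eu k),
    ENNReal.ofReal ‖monom γ y * mDeriv δ u y‖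

/-- `supp ℱf ⊆ S` for a (polynomially bounded, continuous) function `f`:  the pairing
`⟨ℱf, φ⟩ = ∫ f ℱφ` vanishes for every Schwartz `φ` with support disjoint from `S`. -/
def FsuppIn {m : ℕ} (f : Eu m → ℂ) (S : Set (Eu m)) : Prop :=
  ∀ φ : SchwartzMap (Eu m) ℂ, Disjoint (tsupport (φ : Eu m → ℂ)) S →
    (∫ x, f x * pF (fun y => φ y) x) = 0

/-- The one-sided trace `γ_j v (x') = ((-i ∂_{x_n})^j v)(x', 0)`. -/
def traceJ {m : ℕ} (j : ℕ) (v : Eu (m + 1) → ℂ) (x' : Eu m) : ℂ :=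
  (-Complex.I) ^ j * iteratedDeriv j (fun t => v (Fin.snoc x' t)) 0

/-!
The formal adjoint of `OPG g` is the operator with kernel the complex conjugate of
`g*(x', y_n, x_n, ξ')`, where, with `G` the kernel `g`,
`g*(z) = (2π)^{-m} ∫∫ e^{i y·η} G(z - (y, η)) dy dη`,
an oscillatory integral over the tangential phase space `ℝ^m × ℝ^m` in which the two normal variables
are only parameters. So the proof is the adjoint theorem for pseudodifferential symbols, carried
along with two parameters.

The oscillatory integral is made absolutely convergent by averaging. Let `ρ` be a cut-off on phase
space with integral one, and substitute `(y, η) = W - P` with weight `ρ(P)`. The quadratic phase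
splits into a phase in `W`, a phase in `P`, and the bilinear phase `pairP P W`. The integral over `P`
is the amplitude `AA`, with `σ(P) = e^{i x·ξ} ρ(P)` where `P = (x, ξ)`. Integration by parts in `P`
(`AA_parts`, `AA_decay`) shows that `AA` decays rapidly in `W`, and Peetre's inequality shows that the
loss in the order of the symbol is polynomial in `W`. Hence `T0`, the integral of `AA` against
`e^{i y·η}` over `W = (y, η)`, converges, and all derivatives may be taken under the integral sign:
`ddL_T0`. Weights `x_n^l y_n^{l'}` and normal derivatives commute with the construction, so `T0`
preserves each of the estimates that define the class (`SGk.T0`). To make induction over derivatives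
possible, these estimates are first rewritten in terms of coordinate derivatives in arbitrary order
(`SGk`, `inSG_iff`).

For the adjoint identity, both pairings are written by Fubini as integrals over the normal variables
`(s, t)` of phase-space integrals (`opg_pair`, `fubini4`); convergence comes from the decay of the
partial Fourier transforms (`jap_hatu`). For fixed `s, t > 0` the phase-space integrals agree by
`adj_core`, where the integral over the output variables is evaluated by Fourier inversion and the
cut-off integrates to one.
-/

/-! ### Coordinate derivatives on the closed region -/

/-- Phase space `ℝ^m × ℝ^m`. -/
abbrev Ph (m : ℕ) : Type := Eu m × Eu m

/-- The space of all variables `(((x', x_n), y_n), ξ')` of a singular Green symbol-kernel. -/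
abbrev Ee (m : ℕ) : Type := ((Eu m × ℝ) × ℝ) × Eu m

/-- The closed region `x_n ≥ 0`, `y_n ≥ 0`. -/
def Qd (m : ℕ) : Set (Ee m) := {z | 0 ≤ z.1.1.2 ∧ 0 ≤ z.1.2}

/-- Labels of the coordinates of `Ee m`: `inl (inl i)` is `x'_i`, `inl (inr i)` is `ξ'_i`,
`inr false` is `x_n` and `inr true` is `y_n`. -/
abbrev Ix (m : ℕ) : Type := (Fin m ⊕ Fin m) ⊕ Bool

/-- The unit vector in a coordinate direction. -/
def bas {m : ℕ} : Ix m → Ee m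
  | .inl (.inl i) => (((Pi.single i 1, 0), 0), 0)
  | .inl (.inr i) => (((0, 0), 0), Pi.single i 1)
  | .inr false => (((0, 1), 0), 0)
  | .inr true => (((0, 0), 1), 0)

/-- Partial derivative within the closed region `Qd m`. -/
def dd {m : ℕ} (i : Ix m) (G : Ee m → ℂ) (z : Ee m) : ℂ := fderivWithin ℝ G (Qd m) z (bas i)

/-- Iterated partial derivative along a list of coordinates, the head being applied last. -/
def ddL {m : ℕ} (L : List (Ix m)) (G : Ee m → ℂ) : Ee m → ℂ := L.foldr dd G

/-- Smoothness up to the boundary of the closed region. -/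
def Smo {m : ℕ} (G : Ee m → ℂ) : Prop := ContDiffOn ℝ (⊤ : ℕ∞) G (Qd m)

lemma convex_Qd (m : ℕ) : Convex ℝ (Qd m) := by
  intro z hz w hw a b ha hb hab
  constructor
  · have h1 := mul_nonneg ha hz.1
    have h2 := mul_nonneg hb hw.1
    simpa using add_nonneg h1 h2
  · have h1 := mul_nonneg ha hz.2
    have h2 := mul_nonneg hb hw.2
    simpa using add_nonneg h1 h2

lemma interior_Qd_nonempty (m : ℕ) : (interior (Qd m)).Nonempty := by
  refine ⟨(((0, 1), 1), 0), ?_⟩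
  have ho : IsOpen {z : Ee m | 0 < z.1.1.2 ∧ 0 < z.1.2} := by
    apply IsOpen.and
    · exact isOpen_lt continuous_const (by fun_prop)
    · exact isOpen_lt continuous_const (by fun_prop)
  refine mem_interior.2 ⟨_, fun z hz => ⟨hz.1.le, hz.2.le⟩, ho, ?_⟩
  constructor <;> norm_num

lemma uniqueDiffOn_Qd (m : ℕ) : UniqueDiffOn ℝ (Qd m) :=
  uniqueDiffOn_convex (convex_Qd m) (interior_Qd_nonempty m)

lemma Qd_subset_closure_interior (m : ℕ) : Qd m ⊆ closure (interior (Qd m)) := by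
  rw [(convex_Qd m).closure_interior_eq_closure_of_nonempty_interior (interior_Qd_nonempty m)]
  exact subset_closure

lemma Smo.hasFDerivWithinAt {m : ℕ} {G : Ee m → ℂ} (hG : Smo G) {z : Ee m} (hz : z ∈ Qd m) :
    HasFDerivWithinAt G (fderivWithin ℝ G (Qd m) z) (Qd m) z :=
  ((hG.differentiableOn (by simp)) z hz).hasFDerivWithinAt

lemma Smo.fder {m : ℕ} {G : Ee m → ℂ} (hG : Smo G) :
    ContDiffOn ℝ (⊤ : ℕ∞) (fderivWithin ℝ G (Qd m)) (Qd m) :=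
  ContDiffOn.fderivWithin hG (uniqueDiffOn_Qd m) (by simp)

lemma Smo.der {m : ℕ} {G : Ee m → ℂ} (hG : Smo G) (i : Ix m) : Smo (dd i G) :=
  hG.fder.clm_apply contDiffOn_const

lemma ddL_cons {m : ℕ} (i : Ix m) (L : List (Ix m)) (G : Ee m → ℂ) :
    ddL (i :: L) G = dd i (ddL L G) := rfl

lemma ddL_append {m : ℕ} (L M : List (Ix m)) (G : Ee m → ℂ) :
    ddL (L ++ M) G = ddL L (ddL M G) := by
  simp [ddL, List.foldr_append]

lemma Smo.derL {m : ℕ} {G : Ee m → ℂ} (hG : Smo G) (L : List (Ix m)) : Smo (ddL L G) := by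
  induction L with
  | nil => exact hG
  | cons i L ih => exact ih.der i

lemma dd_congr {m : ℕ} {G H : Ee m → ℂ} (h : Set.EqOn G H (Qd m)) (i : Ix m) :
    Set.EqOn (dd i G) (dd i H) (Qd m) := by
  intro z hz
  simp only [dd]
  rw [fderivWithin_congr h (h hz)]

lemma dd_comm {m : ℕ} {G : Ee m → ℂ} (hG : Smo G) (i j : Ix m) :
    Set.EqOn (dd i (dd j G)) (dd j (dd i G)) (Qd m) := by
  intro z hz
  have key : ∀ i j : Ix m, dd i (dd j G) z =
      fderivWithin ℝ (fderivWithin ℝ G (Qd m)) (Qd m) z (bas i) (bas j) := by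
    intro i j
    have h1 : HasFDerivWithinAt (fderivWithin ℝ G (Qd m))
        (fderivWithin ℝ (fderivWithin ℝ G (Qd m)) (Qd m) z) (Qd m) z :=
      ((hG.fder.differentiableOn (by simp)) z hz).hasFDerivWithinAt
    have h2 := h1.clm_apply (hasFDerivWithinAt_const (bas j) z (Qd m))
    have h3 := h2.fderivWithin (uniqueDiffOn_Qd m z hz)
    have h4 : dd i (dd j G) z =
      fderivWithin ℝ (fun y => fderivWithin ℝ G (Qd m) y (bas j)) (Qd m) z (bas i) := rfl
    rw [h4, h3]
    simp
  rw [key, key]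
  have hs := ContDiffWithinAt.isSymmSndFDerivWithinAt (hG z hz) (by simp only [minSmoothness_of_isRCLikeNormedField]; exact WithTop.coe_le_coe.2 le_top)
    (uniqueDiffOn_Qd m) (Qd_subset_closure_interior m hz) hz
  exact hs.eq _ _

lemma ddL_perm {m : ℕ} {G : Ee m → ℂ} (hG : Smo G) {L M : List (Ix m)} (h : L.Perm M) :
    Set.EqOn (ddL L G) (ddL M G) (Qd m) := by
  induction h with
  | nil => exact fun _ _ => rfl
  | cons i _ ih => exact dd_congr ih i
  | swap i j L => exact dd_comm (hG.derL L) _ _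
  | trans _ _ ih1 ih2 => exact ih1.trans ih2

/-- The chain rule along a curve with coordinate velocity. -/
lemma Smo.comp_curve {m : ℕ} {G : Ee m → ℂ} (hG : Smo G) {c : ℝ → Ee m} {S : Set ℝ} {τ : ℝ}
    {i : Ix m} (hc : HasDerivWithinAt c (bas i) S τ) (hS : Set.MapsTo c S (Qd m))
    (hτ : τ ∈ S) : HasDerivWithinAt (fun r => G (c r)) (dd i G (c τ)) S τ :=
  (hG.hasFDerivWithinAt (hS hτ)).comp_hasDerivWithinAt τ hc hS

lemma cDeriv_emb {m : ℕ} {G : Ee m → ℂ} (hG : Smo G) {emb : Eu m → Ee m} {jj : Fin m → Ix m}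
    (he : ∀ y i, HasDerivAt (fun τ => emb (Function.update y i τ)) (bas (jj i)) (y i))
    (hQ : ∀ y, emb y ∈ Qd m) (i : Fin m) :
    cDeriv i (fun y => G (emb y)) = fun y => dd (jj i) G (emb y) := by
  funext y
  have := hG.comp_curve (S := Set.univ) (he y i).hasDerivWithinAt
    (fun _ _ => hQ _) (Set.mem_univ _)
  rw [hasDerivWithinAt_univ] at this
  simpa [cDeriv] using this.deriv

lemma mDeriv_emb {m : ℕ} {G : Ee m → ℂ} (hG : Smo G) {emb : Eu m → Ee m} {jj : Fin m → Ix m}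
    (he : ∀ y i, HasDerivAt (fun τ => emb (Function.update y i τ)) (bas (jj i)) (y i))
    (hQ : ∀ y, emb y ∈ Qd m) (α : Fin m → ℕ) :
    mDeriv α (fun y => G (emb y)) = fun y =>
      ddL ((List.finRange m).flatMap fun i => List.replicate (α i) (jj i)) G (emb y) := by
  have it : ∀ (H : Ee m → ℂ), Smo H → ∀ i n, (cDeriv i)^[n] (fun y => H (emb y)) =
      fun y => ddL (List.replicate n (jj i)) H (emb y) := by
    intro H hH i n
    induction n with
    | zero => rfl
    | succ n ih =>
      rw [Function.iterate_succ_apply', ih, cDeriv_emb (hH.derL _) he hQ]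
      rfl
  unfold mDeriv
  induction (List.finRange m) with
  | nil => rfl
  | cons i l ih =>
    rw [List.foldr_cons, ih, it _ (hG.derL _)]
    simp only [List.flatMap_cons, ddL_append]

lemma iteratedDerivWithin_curve {m : ℕ} {G : Ee m → ℂ} (hG : Smo G) {c : ℝ → Ee m} {j : Ix m}
    (hc : ∀ τ, HasDerivAt c (bas j) τ) (hS : Set.MapsTo c (Set.Ici 0) (Qd m)) (n : ℕ) :
    Set.EqOn (iteratedDerivWithin n (fun r => G (c r)) (Set.Ici 0))
      (fun r => ddL (List.replicate n j) G (c r)) (Set.Ici 0) := by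
  induction n with
  | zero => intro r _; simp [ddL]
  | succ n ih =>
    intro r hr
    rw [iteratedDerivWithin_succ, derivWithin_congr ih (ih hr)]
    have := (hG.derL (List.replicate n j)).comp_curve (hc r).hasDerivWithinAt hS hr
    rw [this.derivWithin (uniqueDiffOn_Ici 0 r hr)]
    rfl

/-- The list of coordinate derivatives that occurs in the symbol-kernel seminorms. -/
def canL {m : ℕ} (α β : Fin m → ℕ) (mm mm' : ℕ) : List (Ix m) :=
  List.replicate mm (.inr false) ++ (List.replicate mm' (.inr true) ++
    (((List.finRange m).flatMap fun i => List.replicate (β i) (.inl (.inl i))) ++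
      ((List.finRange m).flatMap fun i => List.replicate (α i) (.inl (.inr i)))))

/-- A symbol-kernel as a function of one variable in `Ee m`. -/
def unc {m : ℕ} (g : Eu m → ℝ → ℝ → Eu m → ℂ) (z : Ee m) : ℂ := g z.1.1.1 z.1.1.2 z.1.2 z.2

lemma hasDerivAt_update' {m : ℕ} (y : Eu m) (i : Fin m) :
    HasDerivAt (fun τ => Function.update y i τ) (Pi.single i (1 : ℝ)) (y i) := by
  exact hasDerivAt_update y i (y i)

lemma sgDeriv_eq {m : ℕ} {g : Eu m → ℝ → ℝ → Eu m → ℂ} (hg : Smo (unc g)) (α β : Fin m → ℕ)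
    (l mm l' mm' : ℕ) (x ξ : Eu m) {s t : ℝ} (hs : 0 ≤ s) (ht : 0 ≤ t) :
    sgDeriv α β l mm l' mm' g x s t ξ =
      (s : ℂ) ^ l * (t : ℂ) ^ l' * ddL (canL α β mm mm') (unc g) (((x, s), t), ξ) := by
  unfold sgDeriv canL
  congr 1
  simp only [ddL_append]
  set A : List (Ix m) := (List.finRange m).flatMap fun i => List.replicate (α i) (.inl (.inr i))
  set B : List (Ix m) := (List.finRange m).flatMap fun i => List.replicate (β i) (.inl (.inl i))
  have h1 : ∀ y u v, 0 ≤ u → 0 ≤ v → mDeriv α (fun η => g y u v η) ξ =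
      ddL A (unc g) (((y, u), v), ξ) :=
    fun y u v hu hv => congrFun (mDeriv_emb hg (emb := fun η => (((y, u), v), η))
      (jj := fun i => .inl (.inr i))
      (fun y' i => (hasDerivAt_const (y' i) ((y, u), v)).prodMk (hasDerivAt_update' y' i))
      (fun _ => ⟨hu, hv⟩) α) ξ
  have h2 : ∀ u v, 0 ≤ u → 0 ≤ v →
      mDeriv β (fun y => mDeriv α (fun η => g y u v η) ξ) x =
        ddL B (ddL A (unc g)) (((x, u), v), ξ) := by
    intro u v hu hv
    have e : (fun y => mDeriv α (fun η => g y u v η) ξ) =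
        fun y => ddL A (unc g) (((y, u), v), ξ) := funext fun y => h1 y u v hu hv
    rw [e]
    exact congrFun (mDeriv_emb (hg.derL _) (emb := fun y => (((y, u), v), ξ))
      (jj := fun i => .inl (.inl i))
      (fun y' i => (((hasDerivAt_update' y' i).prodMk (hasDerivAt_const (y' i) u)).prodMk
        (hasDerivAt_const (y' i) v)).prodMk (hasDerivAt_const (y' i) ξ))
      (fun _ => ⟨hu, hv⟩) β) x
  have h3 : ∀ u, 0 ≤ u → iteratedDerivWithin mm'
      (fun v => mDeriv β (fun y => mDeriv α (fun η => g y u v η) ξ) x) (Set.Ici 0) t =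
      ddL (List.replicate mm' (.inr true)) (ddL B (ddL A (unc g))) (((x, u), t), ξ) := by
    intro u hu
    rw [iteratedDerivWithin_congr (g := fun v => ddL B (ddL A (unc g)) (((x, u), v), ξ))
      (fun v (hv : v ∈ Set.Ici (0 : ℝ)) => h2 u v hu hv) (Set.mem_Ici.2 ht)]
    exact iteratedDerivWithin_curve (j := .inr true) ((hg.derL _).derL _) (c := fun v => (((x, u), v), ξ))
      (fun τ => ((hasDerivAt_const τ (x, u)).prodMk (hasDerivAt_id' τ)).prodMk
        (hasDerivAt_const τ ξ)) (fun v hv => ⟨hu, hv⟩) mm' ht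
  rw [iteratedDerivWithin_congr
    (g := fun u => ddL (List.replicate mm' (.inr true)) (ddL B (ddL A (unc g))) (((x, u), t), ξ))
    (fun u (hu : u ∈ Set.Ici (0 : ℝ)) => h3 u hu) (Set.mem_Ici.2 hs)]
  exact iteratedDerivWithin_curve (j := .inr false) (((hg.derL _).derL _).derL _) (c := fun u => (((x, u), t), ξ))
    (fun τ => (((hasDerivAt_const τ x).prodMk (hasDerivAt_id' τ)).prodMk
      (hasDerivAt_const τ t)).prodMk (hasDerivAt_const τ ξ)) (fun v hv => ⟨hv, ht⟩) mm hs

/-! ### The symbol-kernel class and its symmetries -/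

/-- The order by which a coordinate derivative raises the order of a symbol-kernel. -/
def wt {m : ℕ} : Ix m → ℝ
  | .inl (.inl _) => 0
  | .inl (.inr _) => -1
  | .inr _ => 1

/-- The order by which a list of coordinate derivatives raises the order. -/
def wtL {m : ℕ} (L : List (Ix m)) : ℝ := (L.map wt).sum

/-- The symbol-kernel class with the coordinate derivatives taken in arbitrary order. -/
def SGk {m : ℕ} (D : ℝ) (G : Ee m → ℂ) : Prop :=
  Smo G ∧ ∀ (L : List (Ix m)) (l l' : ℕ), ∃ C : ℝ, ∀ z ∈ Qd m,
    ‖(z.1.1.2 : ℂ) ^ l * (z.1.2 : ℂ) ^ l' * ddL L G z‖ ≤ C * jap z.2 ^ (D + wtL L - l - l')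

lemma one_le_jap {m : ℕ} (ξ : Eu m) : 1 ≤ jap ξ := by
  unfold jap
  rw [Real.one_le_sqrt]
  have : 0 ≤ ∑ i, ξ i ^ 2 := Finset.sum_nonneg fun i _ => sq_nonneg _
  linarith

lemma jap_pos {m : ℕ} (ξ : Eu m) : 0 < jap ξ := lt_of_lt_of_le one_pos (one_le_jap ξ)

lemma sgSemiE_ne_top_iff {m : ℕ} {d : ℝ} {α β : Fin m → ℕ} {l mm l' mm' : ℕ}
    {g : Eu m → ℝ → ℝ → Eu m → ℂ} :
    sgSemiE d α β l mm l' mm' g ≠ ∞ ↔ ∃ C : ℝ, ∀ (x ξ : Eu m) (s t : ℝ), 0 ≤ s → 0 ≤ t →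
      ‖sgDeriv α β l mm l' mm' g x s t ξ‖ ≤
        C * jap ξ ^ (d + 1 - (degS α : ℝ) - (l : ℝ) + (mm : ℝ) - (l' : ℝ) + (mm' : ℝ)) := by
  constructor
  · intro h
    refine ⟨(sgSemiE d α β l mm l' mm' g).toReal, fun x ξ s t hs ht => ?_⟩
    have h1 : ENNReal.ofReal (jap ξ ^
          (-(d + 1 - (degS α : ℝ) - (l : ℝ) + (mm : ℝ) - (l' : ℝ) + (mm' : ℝ))) *
        ‖sgDeriv α β l mm l' mm' g x s t ξ‖) ≤ sgSemiE d α β l mm l' mm' g := by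
      unfold sgSemiE
      exact le_iSup_of_le x (le_iSup_of_le ξ (le_iSup_of_le ⟨s, hs⟩ (le_iSup_of_le ⟨t, ht⟩ le_rfl)))
    rw [ENNReal.ofReal_le_iff_le_toReal h, Real.rpow_neg (jap_pos ξ).le,
      inv_mul_le_iff₀ (Real.rpow_pos_of_pos (jap_pos ξ) _)] at h1
    linarith
  · rintro ⟨C, hC⟩
    refine ne_top_of_le_ne_top (ENNReal.ofReal_ne_top (r := C)) ?_
    unfold sgSemiE
    refine iSup_le fun x => iSup_le fun ξ => iSup_le fun s => iSup_le fun t => ?_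
    apply ENNReal.ofReal_le_ofReal
    rw [Real.rpow_neg (jap_pos ξ).le, inv_mul_le_iff₀ (Real.rpow_pos_of_pos (jap_pos ξ) _)]
    have := hC x ξ s t s.2 t.2
    linarith

lemma wtL_append {m : ℕ} (L M : List (Ix m)) : wtL (L ++ M) = wtL L + wtL M := by
  simp [wtL]

lemma wtL_canL {m : ℕ} (α β : Fin m → ℕ) (mm mm' : ℕ) :
    wtL (canL α β mm mm') = mm + mm' - degS α := by
  have h : ∀ (c : Fin m → Ix m) (w : ℝ) (γ : Fin m → ℕ), (∀ i, wt (c i) = w) →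
      wtL ((List.finRange m).flatMap fun i => List.replicate (γ i) (c i)) = degS γ * w := by
    intro c w γ hc
    have : ∀ l : List (Fin m), wtL (l.flatMap fun i => List.replicate (γ i) (c i)) =
        (l.map fun i => (γ i : ℝ)).sum * w := by
      intro l
      induction l with
      | nil => simp [wtL]
      | cons i l ih => rw [List.flatMap_cons, wtL_append, ih]; simp [add_mul, wtL, hc]
    rw [this, degS, Nat.cast_sum, ← List.ofFn_eq_map, List.sum_ofFn]
  simp only [canL, wtL_append]
  rw [h _ 0 _ (fun i => rfl), h _ (-1) _ (fun i => rfl)]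
  simp [wtL, wt]
  ring

lemma exists_canL {m : ℕ} (L : List (Ix m)) : ∃ α β mm mm', L.Perm (canL (m := m) α β mm mm') := by
  let _ : BEq (Ix m) := instBEqOfDecidableEq
  refine ⟨fun i => L.count (.inl (.inr i)), fun i => L.count (.inl (.inl i)),
    L.count (.inr false), L.count (.inr true), ?_⟩
  rw [List.perm_iff_count]
  have h : ∀ (c : Fin m → Ix m) (γ : Fin m → ℕ) (j : Ix m),
      ((List.finRange m).flatMap fun i => List.replicate (γ i) (c i)).count j =
        ∑ i, if c i = j then γ i else 0 := by
    intro c γ j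
    have : ∀ l : List (Fin m), (l.flatMap fun i => List.replicate (γ i) (c i)).count j =
        (l.map fun i => if c i = j then γ i else 0).sum := by
      intro l
      induction l with
      | nil => simp
      | cons i l ih => simp [ih, List.count_replicate] 
    rw [this, ← List.ofFn_eq_map, List.sum_ofFn]
  intro j
  simp only [canL, List.count_append, h, List.count_replicate]
  rcases j with (i | i) | b
  · simp
  · simp
  · cases b <;> simp

lemma inSG_iff {m : ℕ} {d : ℝ} {g : Eu m → ℝ → ℝ → Eu m → ℂ} :
    InSG d g ↔ SGk (d + 1) (unc g) := by
  unfold InSG SGk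
  refine and_congr_right fun hg => ?_
  have hg' : Smo (unc g) := hg
  simp only [sgSemiE_ne_top_iff]
  constructor
  · intro h L l l'
    obtain ⟨α, β, mm, mm', hp⟩ := exists_canL L
    obtain ⟨C, hC⟩ := h α β l mm l' mm'
    refine ⟨C, fun z hz => ?_⟩
    obtain ⟨⟨⟨x, s⟩, t⟩, ξ⟩ := z
    have h1 := hC x ξ s t hz.1 hz.2
    rw [sgDeriv_eq hg' _ _ _ _ _ _ _ _ hz.1 hz.2, ← ddL_perm hg' hp hz] at h1
    have h2 : wtL L = mm + mm' - degS α := by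
      rw [← wtL_canL α β mm mm']
      exact (hp.map wt).sum_eq
    rw [h2]
    convert h1 using 3
    ring
  · intro h α β l mm l' mm'
    obtain ⟨C, hC⟩ := h (canL α β mm mm') l l'
    refine ⟨C, fun x ξ s t hs ht => ?_⟩
    rw [sgDeriv_eq hg' _ _ _ _ _ _ _ _ hs ht]
    have h1 := hC (((x, s), t), ξ) ⟨hs, ht⟩
    rw [wtL_canL] at h1
    convert h1 using 3
    ring

lemma SGk.der {m : ℕ} {D : ℝ} {G : Ee m → ℂ} (hG : SGk D G) (i : Ix m) :
    SGk (D + wt i) (dd i G) := by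
  refine ⟨hG.1.der i, fun L l l' => ?_⟩
  obtain ⟨C, hC⟩ := hG.2 (L ++ [i]) l l'
  refine ⟨C, fun z hz => ?_⟩
  have h1 := hC z hz
  rw [ddL_append, wtL_append] at h1
  have h2 : D + wt i + wtL L - l - l' = D + (wtL L + wtL [i]) - l - l' := by
    simp [wtL]
    ring
  rw [h2]
  exact h1

/-- Interchange of the two normal variables. -/
def swapE (m : ℕ) : Ee m ≃L[ℝ] Ee m :=
  ContinuousLinearEquiv.prodCongr
    ((ContinuousLinearEquiv.prodAssoc ℝ (Eu m) ℝ ℝ).trans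
      (((ContinuousLinearEquiv.refl ℝ (Eu m)).prodCongr (ContinuousLinearEquiv.prodComm ℝ ℝ ℝ)).trans
        (ContinuousLinearEquiv.prodAssoc ℝ (Eu m) ℝ ℝ).symm)) (ContinuousLinearEquiv.refl ℝ (Eu m))

lemma swapE_apply {m : ℕ} (z : Ee m) : swapE m z = (((z.1.1.1, z.1.2), z.1.1.2), z.2) := rfl

/-- The action of `swapE` on coordinate labels. -/
def swapI {m : ℕ} : Ix m → Ix m
  | .inl a => .inl a
  | .inr b => .inr (!b)

lemma swapE_bas {m : ℕ} (i : Ix m) : swapE m (bas i) = bas (swapI i) := by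
  rcases i with (i | i) | b
  · rfl
  · rfl
  · cases b <;> rfl

lemma swapE_preimage (m : ℕ) : swapE m ⁻¹' Qd m = Qd m := by
  ext z
  exact and_comm

/-- Complex conjugate of a kernel, with the normal variables interchanged. -/
def cjs {m : ℕ} (G : Ee m → ℂ) (z : Ee m) : ℂ := (starRingEnd ℂ) (G (swapE m z))

lemma cjs_eq {m : ℕ} (G : Ee m → ℂ) : cjs G = Complex.conjCLE ∘ (G ∘ swapE m) := rfl

lemma Smo.cjs {m : ℕ} {G : Ee m → ℂ} (hG : Smo G) : Smo (cjs G) := by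
  rw [cjs_eq]
  refine Complex.conjCLE.contDiff.comp_contDiffOn ?_
  have := hG.comp_continuousLinearMap (swapE m : Ee m →L[ℝ] Ee m)
  simpa only [ContinuousLinearEquiv.coe_coe, swapE_preimage] using this

lemma dd_cjs {m : ℕ} {G : Ee m → ℂ} (i : Ix m) :
    Set.EqOn (dd i (cjs G)) (cjs (dd (swapI i) G)) (Qd m) := by
  intro z hz
  have hu := uniqueDiffOn_Qd m z hz
  have h2 := (swapE m).comp_right_fderivWithin (f := G) (s := Qd m) (x := z)
    (by rw [swapE_preimage]; exact hu)
  simp only [swapE_preimage] at h2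
  change fderivWithin ℝ (cjs G) (Qd m) z (bas i) =
    (starRingEnd ℂ) (fderivWithin ℝ G (Qd m) (swapE m z) (bas (swapI i)))
  rw [cjs_eq,
    Complex.conjCLE.comp_fderivWithin hu, h2]
  simp [swapE_bas]

lemma ddL_cjs {m : ℕ} {G : Ee m → ℂ} (L : List (Ix m)) :
    Set.EqOn (ddL L (cjs G)) (cjs (ddL (L.map swapI) G)) (Qd m) := by
  induction L with
  | nil => exact fun _ _ => rfl
  | cons i L ih =>
    intro z hz
    rw [ddL_cons, dd_congr ih i hz, dd_cjs _ hz]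
    rfl

lemma SGk.cjs {m : ℕ} {D : ℝ} {G : Ee m → ℂ} (hG : SGk D G) : SGk D (cjs G) := by
  refine ⟨hG.1.cjs, fun L l l' => ?_⟩
  obtain ⟨C, hC⟩ := hG.2 (L.map swapI) l' l
  refine ⟨C, fun z hz => ?_⟩
  have h1 := hC (swapE m z) ((swapE_preimage m).symm ▸ hz)
  have h2 : wtL (L.map swapI) = wtL L := by
    have : (wt ∘ swapI : Ix m → ℝ) = wt := by
      funext i; rcases i with (i | i) | b <;> rfl
    simp [wtL, this]
  rw [h2, swapE_apply] at h1
  rw [ddL_cjs L hz]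
  have h3 : ‖(z.1.1.2 : ℂ) ^ l * (z.1.2 : ℂ) ^ l' * _root_.cjs (ddL (L.map swapI) G) z‖ =
    ‖(z.1.2 : ℂ) ^ l' * (z.1.1.2 : ℂ) ^ l * ddL (L.map swapI) G (swapE m z)‖ := by
    simp only [_root_.cjs, norm_mul, RCLike.norm_conj]
    ring
  rw [h3]
  refine h1.trans (le_of_eq ?_)
  ring_nf

/-! ### The regularised amplitude -/

lemma jap_add_le {m : ℕ} (ξ η : Eu m) :
    jap (ξ + η) ≤ (2 + 2 * m) * jap ξ * (1 + ‖η‖) := by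
  have hn := norm_nonneg η
  have h0 : 0 ≤ ∑ i, ξ i ^ 2 := Finset.sum_nonneg fun i _ => sq_nonneg _
  have hj : jap ξ ^ 2 = 1 + ∑ i, ξ i ^ 2 := Real.sq_sqrt (by linarith)
  unfold jap at hj ⊢
  set J := √(1 + ∑ i, ξ i ^ 2)
  apply Real.sqrt_le_iff.2
  refine ⟨by positivity, ?_⟩
  have h1 : ∑ i, (ξ + η) i ^ 2 ≤ ∑ i, (2 * ξ i ^ 2 + 2 * ‖η‖ ^ 2) := by
    refine Finset.sum_le_sum fun i _ => ?_
    have h2 : η i ^ 2 ≤ ‖η‖ ^ 2 := by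
      rw [← sq_abs]
      exact pow_le_pow_left₀ (abs_nonneg _) (norm_le_pi_norm η i) 2
    simp only [Pi.add_apply]
    nlinarith [sq_nonneg (ξ i - η i)]
  rw [Finset.sum_add_distrib, ← Finset.mul_sum, Finset.sum_const, Finset.card_univ,
    Fintype.card_fin, nsmul_eq_mul] at h1
  have h3 : (1 : ℝ) ≤ J ^ 2 := by linarith
  have hm : (0 : ℝ) ≤ m := Nat.cast_nonneg m
  calc 1 + ∑ i, (ξ + η) i ^ 2 ≤ 2 * J ^ 2 + m * (2 * ‖η‖ ^ 2) * 1 := by linarith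
    _ ≤ 2 * J ^ 2 + m * (2 * ‖η‖ ^ 2) * J ^ 2 := by gcongr
    _ = (2 + 2 * m * ‖η‖ ^ 2) * J ^ 2 := by ring
    _ ≤ ((2 + 2 * m) ^ 2 * (1 + ‖η‖) ^ 2) * J ^ 2 := by
        gcongr
        have a1 : (2 + 2 * (m : ℝ)) ≤ (2 + 2 * m) ^ 2 := by nlinarith
        have a2 : 1 + ‖η‖ ^ 2 ≤ (1 + ‖η‖) ^ 2 := by nlinarith
        calc 2 + 2 * (m : ℝ) * ‖η‖ ^ 2 ≤ (2 + 2 * m) * (1 + ‖η‖ ^ 2) := by nlinarith [sq_nonneg ‖η‖]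
          _ ≤ _ := by gcongr
    _ = _ := by ring

/-- Peetre's inequality. -/
lemma peetre {m : ℕ} (r : ℝ) (ξ η : Eu m) :
    jap (ξ + η) ^ r ≤ (2 + 2 * m : ℝ) ^ |r| * jap ξ ^ r * (1 + ‖η‖) ^ |r| := by
  have hn := norm_nonneg η
  have hx := jap_pos ξ
  have hxe := jap_pos (ξ + η)
  have hc : (0 : ℝ) < 2 + 2 * m := by positivity
  rcases le_or_gt 0 r with hr | hr
  · rw [abs_of_nonneg hr, ← Real.mul_rpow hc.le hx.le, ← Real.mul_rpow (by positivity) (by positivity)]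
    exact Real.rpow_le_rpow hxe.le (jap_add_le ξ η) hr
  · have h1 := jap_add_le (ξ + η) (-η)
    rw [add_neg_cancel_right, norm_neg] at h1
    have h2 := Real.rpow_le_rpow hx.le h1 (neg_nonneg.2 hr.le)
    rw [Real.mul_rpow (by positivity) (by positivity), Real.mul_rpow (by positivity) (by positivity),
      Real.rpow_neg hxe.le, Real.rpow_neg hx.le] at h2
    rw [abs_of_neg hr]
    have e1 : 0 < jap ξ ^ r := Real.rpow_pos_of_pos hx _
    have e2 : 0 < jap (ξ + η) ^ r := Real.rpow_pos_of_pos hxe _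
    have h3 := mul_le_mul_of_nonneg_left h2 (mul_pos e1 e2).le
    rw [mul_assoc, mul_comm (jap (ξ + η) ^ r), ← mul_assoc, mul_inv_cancel₀ e1.ne', one_mul] at h3
    refine h3.trans (le_of_eq ?_)
    field_simp

/-- The embedding of phase space into `Ee m`, with both normal variables zero. Translating by
`iota P` moves the tangential variables and preserves the region `Qd m`. -/
def iota {m : ℕ} (P : Ph m) : Ee m := (((P.1, 0), 0), P.2)

/-- The symmetric pairing `x·η + ξ·y` of `P = (x, ξ)` and `W = (y, η)`: the polarisation of the
quadratic phase `x·ξ`. -/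
def pairP {m : ℕ} (P W : Ph m) : ℝ := dotp P.1 W.2 + dotp P.2 W.1

/-- The regularised amplitude: the kernel `G`, cut off by `σ` to a neighbourhood of `z - W` in the
tangential variables and integrated against the phase of frequency `W`. Since the frequency
is the displacement itself, smoothness of `G` becomes decay in `W`. -/
def AA {m : ℕ} (σ : Ph m → ℂ) (G : Ee m → ℂ) (W : Ph m) (z : Ee m) : ℂ :=
  ∫ P : Ph m, cexp (-(I * (pairP P W : ℂ))) * (σ P * G (z + iota (P - W)))

/-- Smooth compactly supported functions on phase space. -/
def Tst {m : ℕ} (σ : Ph m → ℂ) : Prop := ContDiff ℝ (⊤ : ℕ∞) σ ∧ HasCompactSupport σ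

/-- Kernels all of whose tangential derivatives, weighted by `x_n^l y_n^{l'}`, are of order `r`
in `ξ'`. -/
def XB {m : ℕ} (l l' : ℕ) (r : ℝ) (G : Ee m → ℂ) : Prop :=
  Smo G ∧ ∀ L : List (Fin m ⊕ Fin m), ∃ C : ℝ, ∀ z ∈ Qd m,
    ‖(z.1.1.2 : ℂ) ^ l * (z.1.2 : ℂ) ^ l' * ddL (L.map Sum.inl) G z‖ ≤ C * jap z.2 ^ r

lemma add_iota_mem {m : ℕ} {z : Ee m} (hz : z ∈ Qd m) (P : Ph m) : z + iota P ∈ Qd m := by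
  constructor
  · simpa [iota] using hz.1
  · simpa [iota] using hz.2

lemma XB.der {m : ℕ} {l l' : ℕ} {r : ℝ} {G : Ee m → ℂ} (hG : XB l l' r G) (j : Fin m ⊕ Fin m) :
    XB l l' r (dd (.inl j) G) := by
  refine ⟨hG.1.der _, fun L => ?_⟩
  obtain ⟨C, hC⟩ := hG.2 (L ++ [j])
  refine ⟨C, fun z hz => ?_⟩
  have := hC z hz
  rwa [List.map_append, ddL_append] at this

/-- Weighted derivatives of a symbol-kernel satisfy `XB`: further tangential derivatives do not
increase the order. -/
lemma SGk.xb {m : ℕ} {D : ℝ} {G : Ee m → ℂ} (hG : SGk D G) (L : List (Ix m)) (l l' : ℕ) :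
    XB l l' (D + wtL L - l - l') (ddL L G) := by
  refine ⟨hG.1.derL L, fun M => ?_⟩
  obtain ⟨C, hC⟩ := hG.2 (M.map Sum.inl ++ L) l l'
  refine ⟨|C|, fun z hz => ?_⟩
  have h1 := hC z hz
  rw [ddL_append, wtL_append] at h1
  refine h1.trans ?_
  have h2 : wtL (M.map Sum.inl : List (Ix m)) ≤ 0 := by
    clear h1 hC
    unfold wtL
    induction M with
    | nil => simp
    | cons a M ih =>
      rw [List.map_cons, List.map_cons, List.sum_cons]
      have : wt (Sum.inl a : Ix m) ≤ 0 := by rcases a with a | a <;> simp [wt]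
      linarith
  calc C * jap z.2 ^ (D + (wtL (M.map Sum.inl : List (Ix m)) + wtL L) - l - l')
      ≤ |C| * jap z.2 ^ (D + (wtL (M.map Sum.inl : List (Ix m)) + wtL L) - l - l') :=
        mul_le_mul_of_nonneg_right (le_abs_self C) (Real.rpow_nonneg (jap_pos _).le _)
    _ ≤ _ := by
        refine mul_le_mul_of_nonneg_left ?_ (abs_nonneg C)
        exact Real.rpow_le_rpow_of_exponent_le (one_le_jap _) (by linarith)

/-- Under a tangential translation by `P - W` the estimate in `XB` is lost only up to a polynomial
factor, by Peetre's inequality. -/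
lemma XB.bound {m : ℕ} {l l' : ℕ} {r : ℝ} {G : Ee m → ℂ} (hG : XB l l' r G) :
    ∃ C, 0 ≤ C ∧ ∀ z ∈ Qd m, ∀ P W : Ph m,
      ‖(z.1.1.2 : ℂ) ^ l * (z.1.2 : ℂ) ^ l' * G (z + iota (P - W))‖ ≤
        C * jap z.2 ^ r * ((1 + ‖P‖) ^ |r| * (1 + ‖W‖) ^ |r|) := by
  obtain ⟨C, hC⟩ := hG.2 []
  refine ⟨|C| * (2 + 2 * m : ℝ) ^ |r|, by positivity, fun z hz P W => ?_⟩
  have h1 := hC (z + iota (P - W)) (add_iota_mem hz _)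
  simp only [List.map_nil, ddL, List.foldr_nil] at h1
  have e1 : (z + iota (P - W)).1.1.2 = z.1.1.2 := by simp [iota]
  have e2 : (z + iota (P - W)).1.2 = z.1.2 := by simp [iota]
  have e3 : (z + iota (P - W)).2 = z.2 + (P - W).2 := by simp [iota]
  rw [e1, e2, e3] at h1
  refine h1.trans ?_
  have hp := peetre r z.2 (P - W).2
  have hP := norm_nonneg P
  have hW := norm_nonneg W
  have hj := Real.rpow_nonneg (jap_pos z.2).le r
  have h2 : (1 + ‖(P - W).2‖) ^ |r| ≤ (1 + ‖P‖) ^ |r| * (1 + ‖W‖) ^ |r| := by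
    rw [← Real.mul_rpow (by positivity) (by positivity)]
    refine Real.rpow_le_rpow (by positivity) ?_ (abs_nonneg r)
    have h3 := norm_snd_le (P - W)
    have h4 := norm_sub_le P W
    nlinarith
  calc C * jap (z.2 + (P - W).2) ^ r ≤ |C| * jap (z.2 + (P - W).2) ^ r :=
        mul_le_mul_of_nonneg_right (le_abs_self C) (Real.rpow_nonneg (jap_pos _).le _)
    _ ≤ |C| * ((2 + 2 * m : ℝ) ^ |r| * jap z.2 ^ r * ((1 + ‖P‖) ^ |r| * (1 + ‖W‖) ^ |r|)) := by
        refine mul_le_mul_of_nonneg_left (hp.trans ?_) (abs_nonneg C)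
        exact mul_le_mul_of_nonneg_left h2 (by positivity)
    _ = _ := by ring

@[fun_prop]
lemma continuous_iota {m : ℕ} : Continuous (iota : Ph m → Ee m) := by
  unfold iota; fun_prop

@[fun_prop]
lemma continuous_dotp {m : ℕ} {X : Type*} [TopologicalSpace X] {f g : X → Eu m}
    (hf : Continuous f) (hg : Continuous g) : Continuous fun x => dotp (f x) (g x) := by
  unfold dotp; fun_prop

@[fun_prop]
lemma continuous_pairP {m : ℕ} {X : Type*} [TopologicalSpace X] {f g : X → Ph m}
    (hf : Continuous f) (hg : Continuous g) : Continuous fun x => pairP (f x) (g x) := by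
  unfold pairP; fun_prop

lemma Smo.continuous_shift {m : ℕ} {G : Ee m → ℂ} (hG : Smo G) {z : Ee m} (hz : z ∈ Qd m)
    {X : Type*} [TopologicalSpace X] {f : X → Ph m} (hf : Continuous f) :
    Continuous fun x => G (z + iota (f x)) :=
  hG.continuousOn.comp_continuous (by fun_prop) fun _ => add_iota_mem hz _

lemma norm_cexp_neg_I (x : ℝ) : ‖cexp (-(I * (x : ℂ)))‖ = 1 := by
  rw [show -(I * (x : ℂ)) = ((-x : ℝ) : ℂ) * I by push_cast; ring]
  exact Complex.norm_exp_ofReal_mul_I _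

lemma norm_cexp_I (x : ℝ) : ‖cexp (I * (x : ℂ))‖ = 1 := by
  rw [mul_comm]; exact Complex.norm_exp_ofReal_mul_I _

lemma Tst.integrable_wt {m : ℕ} {σ : Ph m → ℂ} (hσ : Tst σ) (r : ℝ) (hr : 0 ≤ r) :
    Integrable fun P => ‖σ P‖ * (1 + ‖P‖) ^ r := by
  refine Continuous.integrable_of_hasCompactSupport ?_ hσ.2.norm.mul_right
  refine hσ.1.continuous.norm.mul ?_
  exact Continuous.rpow_const (by fun_prop) fun _ => Or.inr hr

lemma Tst.integrable_AA {m : ℕ} {σ : Ph m → ℂ} (hσ : Tst σ) {G : Ee m → ℂ} (hG : Smo G)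
    {z : Ee m} (hz : z ∈ Qd m) (W : Ph m) :
    Integrable fun P : Ph m => cexp (-(I * (pairP P W : ℂ))) * (σ P * G (z + iota (P - W))) := by
  refine Continuous.integrable_of_hasCompactSupport ?_ (hσ.2.mul_right.mul_left)
  exact (by fun_prop : Continuous fun P : Ph m => cexp (-(I * (pairP P W : ℂ)))).mul
    (hσ.1.continuous.mul (hG.continuous_shift hz (by fun_prop)))

/-- The bound on the regularised amplitude without decay in `W`. -/
lemma AA_bound {m : ℕ} {l l' : ℕ} {r : ℝ} {G : Ee m → ℂ} (hG : XB l l' r G)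
    {σ : Ph m → ℂ} (hσ : Tst σ) :
    ∃ C, ∀ W : Ph m, ∀ z ∈ Qd m, ‖(z.1.1.2 : ℂ) ^ l * (z.1.2 : ℂ) ^ l' * AA σ G W z‖ ≤
      C * (jap z.2 ^ r * (1 + ‖W‖) ^ |r|) := by
  obtain ⟨C, -, hC⟩ := hG.bound
  refine ⟨∫ P, C * (‖σ P‖ * (1 + ‖P‖) ^ |r|), fun W z hz => ?_⟩
  unfold AA
  rw [← integral_const_mul, ← integral_mul_const]
  refine norm_integral_le_of_norm_le
    (((hσ.integrable_wt |r| (abs_nonneg r)).const_mul C).mul_const _) (ae_of_all _ fun P => ?_)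
  have h1 := hC z hz P W
  calc ‖(z.1.1.2 : ℂ) ^ l * (z.1.2 : ℂ) ^ l' *
        (cexp (-(I * (pairP P W : ℂ))) * (σ P * G (z + iota (P - W))))‖
      = ‖σ P‖ * ‖(z.1.1.2 : ℂ) ^ l * (z.1.2 : ℂ) ^ l' * G (z + iota (P - W))‖ := by
        rw [norm_mul, norm_mul (cexp _), norm_cexp_neg_I, norm_mul (σ P), norm_mul _ (G _)]
        ring
    _ ≤ ‖σ P‖ * (C * jap z.2 ^ r * ((1 + ‖P‖) ^ |r| * (1 + ‖W‖) ^ |r|)) := by gcongr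
    _ = _ := by ring

/-! ### Decay by integration by parts -/

instance isAddHaarPh (m : ℕ) : (volume : Measure (Ph m)).IsAddHaarMeasure :=
  Measure.prod.instIsAddHaarMeasure (volume : Measure (Eu m)) (volume : Measure (Eu m))

/-- The coordinate directions of phase space. -/
def ebas {m : ℕ} : Fin m ⊕ Fin m → Ph m
  | .inl i => (Pi.single i 1, 0)
  | .inr i => (0, Pi.single i 1)

lemma iota_ebas {m : ℕ} (j : Fin m ⊕ Fin m) : iota (ebas j) = bas (.inl j) := by
  rcases j with i | i <;> rfl

lemma pairP_add {m : ℕ} (P Q W : Ph m) : pairP (P + Q) W = pairP P W + pairP Q W := by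
  simp [pairP, dotp, add_mul, Finset.sum_add_distrib]; ring

lemma pairP_smul {m : ℕ} (c : ℝ) (P W : Ph m) : pairP (c • P) W = c * pairP P W := by
  simp [pairP, dotp, Finset.mul_sum, mul_add, mul_assoc]

lemma hasFDerivAt_pairP {m : ℕ} (P W : Ph m) :
    ∃ f' : Ph m →L[ℝ] ℝ, HasFDerivAt (fun P => pairP P W) f' P ∧ ∀ v, f' v = pairP v W := by
  let f : Ph m →ₗ[ℝ] ℝ :=
    { toFun := fun P => pairP P W
      map_add' := fun P Q => pairP_add P Q W
      map_smul' := fun c P => pairP_smul c P W }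
  exact ⟨f.toContinuousLinearMap, f.toContinuousLinearMap.hasFDerivAt, fun v => rfl⟩

lemma norm_le_sum_pairP {m : ℕ} (W : Ph m) : ‖W‖ ≤ ∑ j, |pairP (ebas j) W| := by
  have h1 : ∀ i : Fin m, pairP (ebas (.inl i)) W = W.2 i := by
    intro i
    simp [pairP, ebas, dotp, Pi.single_apply]
  have h2 : ∀ i : Fin m, pairP (ebas (.inr i)) W = W.1 i := by
    intro i
    simp [pairP, ebas, dotp, Pi.single_apply]
  have h0 : 0 ≤ ∑ j, |pairP (ebas j) W| := Finset.sum_nonneg fun j _ => abs_nonneg _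
  have h3 : ∀ j, |pairP (ebas j) W| ≤ ∑ j, |pairP (ebas j) W| := fun j =>
    Finset.single_le_sum (f := fun j => |pairP (ebas j) W|) (fun j _ => abs_nonneg _) (Finset.mem_univ j)
  rw [Prod.norm_def, max_le_iff, pi_norm_le_iff_of_nonneg h0, pi_norm_le_iff_of_nonneg h0]
  constructor
  · intro i
    rw [← h2, Real.norm_eq_abs]; exact h3 _
  · intro i
    rw [← h1, Real.norm_eq_abs]; exact h3 _

lemma Tst.der {m : ℕ} {σ : Ph m → ℂ} (hσ : Tst σ) (v : Ph m) :
    Tst fun P => fderiv ℝ σ P v := by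
  refine ⟨?_, hσ.2.fderiv_apply ℝ v⟩
  exact (hσ.1.fderiv_right (m := (⊤ : ℕ∞)) (by simp)).clm_apply contDiff_const

lemma Smo.hasFDerivAt_shift {m : ℕ} {G : Ee m → ℂ} (hG : Smo G) {z : Ee m} (hz : z ∈ Qd m)
    (P W : Ph m) :
    ∃ f' : Ph m →L[ℝ] ℂ, HasFDerivAt (fun P => G (z + iota (P - W))) f' P ∧
      ∀ j, f' (ebas j) = dd (.inl j) G (z + iota (P - W)) := by
  let f : Ph m →ₗ[ℝ] Ee m :=
    { toFun := iota
      map_add' := fun P Q => by simp [iota]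
      map_smul' := fun c P => by simp [iota] }
  have h1 : HasFDerivAt (fun P : Ph m => z + iota (P - W)) f.toContinuousLinearMap P :=
    (f.toContinuousLinearMap.hasFDerivAt.comp P ((hasFDerivAt_id P).sub_const W)).const_add z
  have h2 := (hG.hasFDerivWithinAt (add_iota_mem hz (P - W))).comp_hasFDerivAt P h1
    (Filter.Eventually.of_forall fun P => add_iota_mem hz _)
  refine ⟨_, h2, fun j => ?_⟩
  have : f.toContinuousLinearMap (ebas j) = bas (.inl j) := iota_ebas j
  simp [this, dd]

/-- Integration by parts: multiplication by a coordinate of `W` is traded for a derivative. -/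
lemma AA_parts {m : ℕ} {σ : Ph m → ℂ} (hσ : Tst σ) {G : Ee m → ℂ} (hG : Smo G)
    {z : Ee m} (hz : z ∈ Qd m) (W : Ph m) (j : Fin m ⊕ Fin m) :
    I * (pairP (ebas j) W : ℂ) * AA σ G W z =
      AA (fun P => fderiv ℝ σ P (ebas j)) G W z + AA σ (dd (.inl j) G) W z := by
  set f : Ph m → ℂ := fun P => cexp (-(I * (pairP P W : ℂ))) with hf
  set g : Ph m → ℂ := fun P => σ P * G (z + iota (P - W)) with hg
  have hf1 : ∀ P, ∃ f' : Ph m →L[ℝ] ℂ, HasFDerivAt f f' P ∧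
      f' (ebas j) = -(I * (pairP (ebas j) W : ℂ)) * f P := by
    intro P
    obtain ⟨p', hp, hpv⟩ := hasFDerivAt_pairP P W
    have h1 := Complex.ofRealCLM.hasFDerivAt.comp P hp
    have h2 := ((h1.const_mul I).neg).cexp
    refine ⟨_, h2, ?_⟩
    simp [hpv, hf]
    ring
  have hg1 : ∀ P, ∃ g' : Ph m →L[ℝ] ℂ, HasFDerivAt g g' P ∧
      g' (ebas j) = fderiv ℝ σ P (ebas j) * G (z + iota (P - W)) +
        σ P * dd (.inl j) G (z + iota (P - W)) := by
    intro P
    obtain ⟨G', hG', hGv⟩ := hG.hasFDerivAt_shift hz P W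
    have h1 := (hσ.1.differentiable (by simp) P).hasFDerivAt.mul hG'
    refine ⟨_, h1, ?_⟩
    simp [hGv]
    ring
  have ef : ∀ P, fderiv ℝ f P (ebas j) = -(I * (pairP (ebas j) W : ℂ)) * f P := by
    intro P
    obtain ⟨f', h1, h2⟩ := hf1 P
    rw [h1.fderiv, h2]
  have eg : ∀ P, fderiv ℝ g P (ebas j) = fderiv ℝ σ P (ebas j) * G (z + iota (P - W)) +
        σ P * dd (.inl j) G (z + iota (P - W)) := by
    intro P
    obtain ⟨f', h1, h2⟩ := hg1 P
    rw [h1.fderiv, h2]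
  have i0 := hσ.integrable_AA hG hz W
  have i1 := (hσ.der (ebas j)).integrable_AA hG hz W
  have i2 := hσ.integrable_AA (hG.der (.inl j)) hz W
  have e3 : ∀ P, f P * fderiv ℝ g P (ebas j) =
      cexp (-(I * (pairP P W : ℂ))) * (fderiv ℝ σ P (ebas j) * G (z + iota (P - W))) +
      cexp (-(I * (pairP P W : ℂ))) * (σ P * dd (.inl j) G (z + iota (P - W))) := by
    intro P; rw [eg]; ring
  have e4 : ∀ P, fderiv ℝ f P (ebas j) * g P = -(I * (pairP (ebas j) W : ℂ)) * (f P * g P) := by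
    intro P; rw [ef]; ring
  have key := integral_mul_fderiv_eq_neg_fderiv_mul_of_integrable (μ := volume) (f := f) (g := g)
    (v := ebas j) (by simp only [e4]; exact i0.const_mul _)
    (by simp only [e3]; exact i1.add i2) i0
    (fun P _ => (hf1 P).choose_spec.1.differentiableAt)
    (fun P _ => (hg1 P).choose_spec.1.differentiableAt)
  simp only [e3, e4] at key
  rw [integral_add i1 i2, integral_const_mul] at key
  unfold AA
  rw [key]
  ring

/-- Rapid decay of the regularised amplitude in `W`, by iterating `AA_parts`. Each step gains one
power of `‖W‖` and leaves the order `r` unchanged, since `XB` is stable under tangential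
derivatives. -/
lemma AA_decay {m : ℕ} {l l' : ℕ} {r : ℝ} (K : ℕ) : ∀ {G : Ee m → ℂ}, XB l l' r G →
    ∀ {σ : Ph m → ℂ}, Tst σ →
    ∃ C, ∀ W : Ph m, ∀ z ∈ Qd m,
      (1 + ‖W‖) ^ K * ‖(z.1.1.2 : ℂ) ^ l * (z.1.2 : ℂ) ^ l' * AA σ G W z‖ ≤
      C * (jap z.2 ^ r * (1 + ‖W‖) ^ |r|) := by
  induction K with
  | zero =>
    intro G hG σ hσ
    simpa using AA_bound hG hσ
  | succ K ih =>
    intro G hG σ hσ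
    obtain ⟨C0, hC0⟩ := ih hG hσ
    choose C1 hC1 using fun j => ih hG (hσ.der (ebas j))
    choose C2 hC2 using fun j => ih (hG.der j) hσ
    refine ⟨C0 + ∑ j, (C1 j + C2 j), fun W z hz => ?_⟩
    set B := jap z.2 ^ r * (1 + ‖W‖) ^ |r|
    set M : ℂ := (z.1.1.2 : ℂ) ^ l * (z.1.2 : ℂ) ^ l'
    have hW := norm_nonneg W
    have h1 : ∀ j, (1 + ‖W‖) ^ K * (|pairP (ebas j) W| * ‖M * AA σ G W z‖) ≤ (C1 j + C2 j) * B := by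
      intro j
      have e : |pairP (ebas j) W| * ‖M * AA σ G W z‖ =
          ‖M * AA (fun P => fderiv ℝ σ P (ebas j)) G W z + M * AA σ (dd (.inl j) G) W z‖ := by
        rw [← mul_add, ← AA_parts hσ hG.1 hz W j]
        simp only [norm_mul, Complex.norm_I, Complex.norm_real, Real.norm_eq_abs]
        ring
      rw [e]
      calc _ ≤ (1 + ‖W‖) ^ K * (‖M * AA (fun P => fderiv ℝ σ P (ebas j)) G W z‖ +
            ‖M * AA σ (dd (.inl j) G) W z‖) := by gcongr; exact norm_add_le _ _
        _ ≤ _ := by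
          rw [mul_add, add_mul]
          exact add_le_add (hC1 j W z hz) (hC2 j W z hz)
    have h2 : (1 + ‖W‖) ^ K * (‖W‖ * ‖M * AA σ G W z‖) ≤ (∑ j, (C1 j + C2 j)) * B := by
      calc _ ≤ (1 + ‖W‖) ^ K * ((∑ j, |pairP (ebas j) W|) * ‖M * AA σ G W z‖) := by
            gcongr; exact norm_le_sum_pairP W
        _ = ∑ j, (1 + ‖W‖) ^ K * (|pairP (ebas j) W| * ‖M * AA σ G W z‖) := by
            rw [Finset.sum_mul, Finset.mul_sum]
        _ ≤ ∑ j, (C1 j + C2 j) * B := Finset.sum_le_sum fun j _ => h1 j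
        _ = _ := by rw [Finset.sum_mul]
    have h3 := hC0 W z hz
    rw [pow_succ, add_mul]
    calc (1 + ‖W‖) ^ K * (1 + ‖W‖) * ‖M * AA σ G W z‖ =
        (1 + ‖W‖) ^ K * ‖M * AA σ G W z‖ + (1 + ‖W‖) ^ K * (‖W‖ * ‖M * AA σ G W z‖) := by ring
      _ ≤ _ := add_le_add h3 h2

/-! ### The adjoint kernel is a symbol-kernel -/

/-- The coordinate functionals dual to `bas`. -/
def coP {m : ℕ} : Ix m → Ee m →L[ℝ] ℝ
  | .inl (.inl i) => (ContinuousLinearMap.proj i).comp ((ContinuousLinearMap.fst ℝ (Eu m) ℝ).comp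
      ((ContinuousLinearMap.fst ℝ (Eu m × ℝ) ℝ).comp (ContinuousLinearMap.fst ℝ _ (Eu m))))
  | .inl (.inr i) => (ContinuousLinearMap.proj i).comp (ContinuousLinearMap.snd ℝ _ (Eu m))
  | .inr false => (ContinuousLinearMap.snd ℝ (Eu m) ℝ).comp
      ((ContinuousLinearMap.fst ℝ (Eu m × ℝ) ℝ).comp (ContinuousLinearMap.fst ℝ _ (Eu m)))
  | .inr true => (ContinuousLinearMap.snd ℝ (Eu m × ℝ) ℝ).comp (ContinuousLinearMap.fst ℝ _ (Eu m))

lemma sum_coP {m : ℕ} (v : Ee m) : ∑ i, coP i v • bas i = v := by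
  simp only [Fintype.sum_sum_type, Fintype.sum_bool, coP, bas]
  refine Prod.ext (Prod.ext (Prod.ext ?_ ?_) ?_) ?_
  · funext j
    simp [Prod.fst_sum, Finset.sum_apply, Pi.single_apply]
  · simp [Prod.fst_sum, Prod.snd_sum]
  · simp [Prod.fst_sum, Prod.snd_sum]
  · funext j
    simp [Prod.snd_sum, Finset.sum_apply, Pi.single_apply]

lemma norm_coP_le {m : ℕ} (i : Ix m) (v : Ee m) : |coP i v| ≤ ‖v‖ := by
  rcases i with (i | i) | b
  · exact (norm_le_pi_norm v.1.1.1 i).trans ((norm_fst_le v.1.1).trans ((norm_fst_le v.1).trans (norm_fst_le v)))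
  · exact (norm_le_pi_norm v.2 i).trans (norm_snd_le v)
  · cases b
    · exact (norm_snd_le v.1.1).trans ((norm_fst_le v.1).trans (norm_fst_le v))
    · exact (norm_snd_le v.1).trans (norm_fst_le v)

/-- The linear form on `Ee m` with prescribed partial derivatives. -/
def gradL {m : ℕ} (c : Ix m → ℂ) : Ee m →L[ℝ] ℂ := ∑ i, (coP i).smulRight (c i)

lemma gradL_apply {m : ℕ} (c : Ix m → ℂ) (v : Ee m) : gradL c v = ∑ i, (coP i v : ℂ) * c i := by
  simp [gradL]

lemma gradL_bas {m : ℕ} (T : Ee m →L[ℝ] ℂ) : gradL (fun i => T (bas i)) = T := by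
  refine ContinuousLinearMap.ext fun v => ?_
  conv_rhs => rw [← sum_coP v]
  simp [gradL_apply, map_sum]

lemma gradL_mul {m : ℕ} (a : ℂ) (c : Ix m → ℂ) : gradL (fun i => a * c i) = a • gradL c := by
  refine ContinuousLinearMap.ext fun v => ?_
  simp only [gradL_apply, _root_.smul_apply, smul_eq_mul, Finset.mul_sum]
  exact Finset.sum_congr rfl fun i _ => by ring

lemma gradL_apply_bas {m : ℕ} (c : Ix m → ℂ) (i : Ix m) : gradL c (bas i) = c i := by
  rw [gradL_apply, Finset.sum_eq_single i]
  · rcases i with (i | i) | b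
    · simp [coP, bas]
    · simp [coP, bas]
    · cases b <;> simp [coP, bas]
  · intro j _ hj
    have : coP j (bas i) = 0 := by
      rcases i with (i | i) | (_ | _) <;> rcases j with (j | j) | (_ | _) <;>
        simp_all [coP, bas]
    simp [this]
  · simp

lemma norm_gradL_le {m : ℕ} (c : Ix m → ℂ) : ‖gradL c‖ ≤ ∑ i, ‖c i‖ := by
  refine ContinuousLinearMap.opNorm_le_bound _ (Finset.sum_nonneg fun i _ => norm_nonneg _) fun v => ?_
  rw [gradL_apply, Finset.sum_mul]
  refine (norm_sum_le _ _).trans (Finset.sum_le_sum fun i _ => ?_)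
  rw [norm_mul, Complex.norm_real, mul_comm]
  exact mul_le_mul_of_nonneg_left (norm_coP_le i v) (norm_nonneg _)

lemma Smo.hasGrad {m : ℕ} {G : Ee m → ℂ} (hG : Smo G) {z : Ee m} (hz : z ∈ Qd m) :
    HasFDerivWithinAt G (gradL fun i => dd i G z) (Qd m) z := by
  have := hG.hasFDerivWithinAt hz
  rwa [← gradL_bas (fderivWithin ℝ G (Qd m) z)] at this

/-- Differentiation under the integral sign, within the closed region. At boundary points only the
derivative within `Qd m` exists, so dominated convergence is applied to the difference quotients
directly, the mean value inequality on the convex set `Qd m` giving the domination. -/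
lemma hasGrad_integral {m : ℕ} {Ω : Type*} [MeasurableSpace Ω] {μ : Measure Ω}
    {F : Ω → Ee m → ℂ} {F' : Ix m → Ω → Ee m → ℂ} {z0 : Ee m} (hz0 : z0 ∈ Qd m)
    {bound : Ω → ℝ}
    (hF : ∀ ω, ∀ z ∈ Qd m, HasFDerivWithinAt (F ω) (gradL fun i => F' i ω z) (Qd m) z)
    (hb : ∀ i ω, ∀ z ∈ Qd m, ‖z - z0‖ < 1 → ‖F' i ω z‖ ≤ bound ω) (hbi : Integrable bound μ)
    (hFi : ∀ z ∈ Qd m, Integrable (fun ω => F ω z) μ)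
    (hFi' : ∀ i, Integrable (fun ω => F' i ω z0) μ) :
    HasFDerivWithinAt (fun z => ∫ ω, F ω z ∂μ) (gradL fun i => ∫ ω, F' i ω z0 ∂μ) (Qd m) z0 := by
  set N : ℝ := ((Fintype.card (Ix m) : ℕ) : ℝ) with hN
  have hgb : ∀ ω, ∀ z ∈ Qd m, ‖z - z0‖ < 1 → ‖gradL fun i => F' i ω z‖ ≤ N * bound ω := by
    intro ω z hz hzz
    refine (norm_gradL_le _).trans ((Finset.sum_le_sum fun i _ => hb i ω z hz hzz).trans ?_)
    simp [N]
  have hgi : ∀ v, Integrable (fun ω => gradL (fun i => F' i ω z0) v) μ := by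
    intro v
    simp only [gradL_apply]
    exact integrable_finsetSum _ fun i _ => (hFi' i).const_mul _
  have hint : ∀ v, gradL (fun i => ∫ ω, F' i ω z0 ∂μ) v = ∫ ω, gradL (fun i => F' i ω z0) v ∂μ := by
    intro v
    simp only [gradL_apply]
    rw [integral_finsetSum _ fun i _ => (hFi' i).const_mul _]
    simp only [integral_const_mul]
  set Φ : Ee m → Ω → ℂ := fun z ω =>
    ((‖z - z0‖⁻¹ : ℝ) : ℂ) * (F ω z - F ω z0 - gradL (fun i => F' i ω z0) (z - z0)) with hΦ
  have hlim : Tendsto (fun z => ∫ ω, Φ z ω ∂μ) (𝓝[Qd m] z0) (𝓝 (∫ _, (0 : ℂ) ∂μ)) := by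
    refine tendsto_integral_filter_of_dominated_convergence (fun ω => 2 * (N * bound ω)) ?_ ?_
      ((hbi.const_mul N).const_mul 2) ?_
    · filter_upwards [self_mem_nhdsWithin] with z hz
      exact (((hFi z hz).sub (hFi z0 hz0)).sub (hgi _)).aestronglyMeasurable.const_mul _
    · filter_upwards [self_mem_nhdsWithin,
        mem_nhdsWithin_of_mem_nhds (Metric.ball_mem_nhds z0 one_pos)] with z hz hzb
      refine ae_of_all _ fun ω => ?_
      have hzn : ‖z - z0‖ < 1 := by simpa [dist_eq_norm] using hzb
      have h1 : ‖F ω z - F ω z0‖ ≤ N * bound ω * ‖z - z0‖ := by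
        refine Convex.norm_image_sub_le_of_norm_hasFDerivWithin_le
          (f' := fun z => gradL fun i => F' i ω z) (s := Qd m ∩ Metric.ball z0 1)
          (fun x hx => (hF ω x hx.1).mono Set.inter_subset_left)
          (fun x hx => hgb ω x hx.1 (by simpa [dist_eq_norm] using hx.2))
          ((convex_Qd m).inter (convex_ball _ _)) ⟨hz0, by simp⟩ ⟨hz, hzb⟩
      have h2 : ‖gradL (fun i => F' i ω z0) (z - z0)‖ ≤ N * bound ω * ‖z - z0‖ :=
        (ContinuousLinearMap.le_opNorm _ _).trans
          (mul_le_mul_of_nonneg_right (hgb ω z0 hz0 (by simp)) (norm_nonneg _))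
      have h3 : ‖F ω z - F ω z0 - gradL (fun i => F' i ω z0) (z - z0)‖ ≤
          2 * (N * bound ω) * ‖z - z0‖ := (norm_sub_le _ _).trans (by linarith)
      have h4 : 0 ≤ N * bound ω := (norm_nonneg _).trans (hgb ω z0 hz0 (by simp))
      rw [hΦ, norm_mul, Complex.norm_real, norm_inv, norm_norm]
      rcases eq_or_ne ‖z - z0‖ 0 with h0 | h0
      · rw [h0]; simp; exact h4
      · rw [inv_mul_le_iff₀ (lt_of_le_of_ne (norm_nonneg _) (Ne.symm h0))]
        linarith
    · refine ae_of_all _ fun ω => ?_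
      have := hasFDerivWithinAt_iff_tendsto.1 (hF ω z0 hz0)
      rw [tendsto_zero_iff_norm_tendsto_zero]
      refine this.congr fun z => ?_
      rw [hΦ, norm_mul, Complex.norm_real, norm_inv, norm_norm]
  rw [hasFDerivWithinAt_iff_tendsto]
  rw [integral_zero, tendsto_zero_iff_norm_tendsto_zero] at hlim
  refine hlim.congr' ?_
  filter_upwards [self_mem_nhdsWithin] with z hz
  have hs : Integrable (fun ω => F ω z - F ω z0) μ := (hFi z hz).sub (hFi z0 hz0)
  rw [hΦ, integral_const_mul, norm_mul, Complex.norm_real, norm_inv, norm_norm,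
    integral_sub hs (hgi _), integral_sub (hFi z hz) (hFi z0 hz0), hint]

lemma jap_rpow_local {m : ℕ} (r : ℝ) (z0 : Ee m) :
    ∃ C, 0 ≤ C ∧ ∀ z : Ee m, ‖z - z0‖ < 1 → jap z.2 ^ r ≤ C := by
  have hj := Real.rpow_nonneg (jap_pos z0.2).le r
  refine ⟨(2 + 2 * m : ℝ) ^ |r| * jap z0.2 ^ r * 2 ^ |r|, by positivity, fun z hz => ?_⟩
  have h1 := peetre r z0.2 (z.2 - z0.2)
  rw [add_sub_cancel] at h1
  refine h1.trans ?_
  have h2 : ‖z.2 - z0.2‖ ≤ ‖z - z0‖ := norm_snd_le (z - z0)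
  gcongr
  linarith

lemma SGk.xb0 {m : ℕ} {D : ℝ} {G : Ee m → ℂ} (hG : SGk D G) : XB 0 0 D G := by
  have := hG.xb [] 0 0
  simpa [wtL, ddL] using this

lemma SGk.hasGrad_AA {m : ℕ} {D : ℝ} {G : Ee m → ℂ} (hG : SGk D G) {σ : Ph m → ℂ} (hσ : Tst σ)
    (W : Ph m) {z : Ee m} (hz : z ∈ Qd m) :
    HasFDerivWithinAt (AA σ G W) (gradL fun i => AA σ (dd i G) W z) (Qd m) z := by
  choose C hC0 hC using fun i => ((hG.der i).xb0).bound
  choose B hB0 hB using fun i : Ix m => jap_rpow_local (D + wt i) z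
  unfold AA
  refine hasGrad_integral (F := fun P z => cexp (-(I * (pairP P W : ℂ))) * (σ P * G (z + iota (P - W))))
    (F' := fun i P z => cexp (-(I * (pairP P W : ℂ))) * (σ P * dd i G (z + iota (P - W))))
    (bound := fun P => ∑ i, ‖σ P‖ * (1 + ‖P‖) ^ |D + wt i| * (C i * B i * (1 + ‖W‖) ^ |D + wt i|))
    hz ?_ ?_ ?_ ?_ ?_
  · intro P w hw
    have h1 := hG.1.hasGrad (add_iota_mem hw (P - W))
    have h2 : HasFDerivWithinAt (fun w => G (w + iota (P - W)))
        (gradL fun i => dd i G (w + iota (P - W))) (Qd m) w := by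
      have h3 := h1.comp w ((hasFDerivWithinAt_id w (Qd m)).add_const (iota (P - W)))
        (fun x hx => add_iota_mem hx _)
      exact h3
    have h3 := (h2.const_mul (σ P)).const_mul (cexp (-(I * (pairP P W : ℂ))))
    rw [← gradL_mul, ← gradL_mul] at h3
    exact h3
  · intro i P w hw hwz
    rw [norm_mul, norm_cexp_neg_I, one_mul, norm_mul]
    have h1 := hC i w hw P W
    simp only [pow_zero, one_mul] at h1
    have hP := norm_nonneg P
    have hW := norm_nonneg W
    have h2 : ‖σ P‖ * ‖dd i G (w + iota (P - W))‖ ≤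
        ‖σ P‖ * (1 + ‖P‖) ^ |D + wt i| * (C i * B i * (1 + ‖W‖) ^ |D + wt i|) := by
      calc _ ≤ ‖σ P‖ * (C i * B i * ((1 + ‖P‖) ^ |D + wt i| * (1 + ‖W‖) ^ |D + wt i|)) := by
            refine mul_le_mul_of_nonneg_left (h1.trans ?_) (norm_nonneg _)
            have := hB i w hwz
            have := hC0 i
            gcongr
        _ = _ := by ring
    refine h2.trans (Finset.single_le_sum (f := fun i => ‖σ P‖ * (1 + ‖P‖) ^ |D + wt i| *
      (C i * B i * (1 + ‖W‖) ^ |D + wt i|)) (fun j _ => ?_) (Finset.mem_univ i))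
    have := hC0 j
    have := hB0 j
    positivity
  · exact integrable_finsetSum _ fun i _ => (hσ.integrable_wt _ (abs_nonneg _)).mul_const _
  · intro w hw
    exact hσ.integrable_AA hG.1 hw W
  · intro i
    exact hσ.integrable_AA (hG.1.der i) hz W

/-- The decay of the regularised amplitude beats the growth `(1 + ‖W‖)^|r|` and leaves an integrable
weight on the `2m`-dimensional phase space. -/
lemma AA_int {m : ℕ} {l l' : ℕ} {r : ℝ} {G : Ee m → ℂ} (hG : XB l l' r G)
    {σ : Ph m → ℂ} (hσ : Tst σ) :
    ∃ C, 0 ≤ C ∧ ∀ W : Ph m, ∀ z ∈ Qd m, ‖(z.1.1.2 : ℂ) ^ l * (z.1.2 : ℂ) ^ l' * AA σ G W z‖ ≤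
      C * jap z.2 ^ r * (1 + ‖W‖) ^ (-(2 * m + 1 : ℝ)) := by
  set n := ⌈|r|⌉₊
  obtain ⟨C, hC⟩ := AA_decay (n + (2 * m + 1)) hG hσ
  refine ⟨|C|, abs_nonneg C, fun W z hz => ?_⟩
  have h1 := hC W z hz
  have hW := norm_nonneg W
  have hW1 : (0 : ℝ) < 1 + ‖W‖ := by positivity
  have hj := Real.rpow_nonneg (jap_pos z.2).le r
  have h2 : (1 + ‖W‖) ^ |r| ≤ (1 + ‖W‖) ^ n := by
    rw [← Real.rpow_natCast]
    exact Real.rpow_le_rpow_of_exponent_le (by linarith) (Nat.le_ceil _)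
  have h3 : (1 + ‖W‖) ^ (-(2 * m + 1 : ℝ)) = ((1 + ‖W‖) ^ (2 * m + 1))⁻¹ := by
    rw [Real.rpow_neg hW1.le, ← Real.rpow_natCast]
    push_cast
    rfl
  rw [h3, ← div_eq_mul_inv, le_div_iff₀ (by positivity)]
  rw [pow_add] at h1
  have h4 : (1 + ‖W‖) ^ n * (‖(z.1.1.2 : ℂ) ^ l * (z.1.2 : ℂ) ^ l' * AA σ G W z‖ *
      (1 + ‖W‖) ^ (2 * m + 1)) ≤ (1 + ‖W‖) ^ n * (|C| * jap z.2 ^ r) := by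
    calc _ = (1 + ‖W‖) ^ n * (1 + ‖W‖) ^ (2 * m + 1) *
          ‖(z.1.1.2 : ℂ) ^ l * (z.1.2 : ℂ) ^ l' * AA σ G W z‖ := by ring
      _ ≤ C * (jap z.2 ^ r * (1 + ‖W‖) ^ |r|) := h1
      _ ≤ |C| * (jap z.2 ^ r * (1 + ‖W‖) ^ n) := by
        have := le_abs_self C
        gcongr
      _ = _ := by ring
  exact le_of_mul_le_mul_left h4 (by positivity)

lemma integrable_wtW (m : ℕ) : Integrable fun W : Ph m => (1 + ‖W‖) ^ (-(2 * m + 1 : ℝ)) := by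
  refine integrable_one_add_norm (μ := (volume : Measure (Ph m))) ?_
  simp
  linarith

lemma continuous_AA {m : ℕ} {G : Ee m → ℂ} (hG : Smo G) {σ : Ph m → ℂ} (hσ : Tst σ)
    {z : Ee m} (hz : z ∈ Qd m) : StronglyMeasurable fun W : Ph m => AA σ G W z := by
  unfold AA
  refine StronglyMeasurable.integral_prod_right' (ν := (volume : Measure (Ph m)))
    (f := fun p : Ph m × Ph m => cexp (-(I * (pairP p.2 p.1 : ℂ))) * (σ p.2 * G (z + iota (p.2 - p.1)))) ?_
  refine Continuous.stronglyMeasurable ?_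
  refine Continuous.mul (by fun_prop) (Continuous.mul (hσ.1.continuous.comp continuous_snd) ?_)
  exact hG.continuous_shift hz (by fun_prop)

/-- The absolutely convergent form of the adjoint oscillatory integral with cut-off `σ`. For
`σ = sig0 m` it is the regularisation of `∫ e^{i y·η} G(z - (y, η)) d(y, η)`; complex conjugation,
the interchange of the normal variables and the power of `2π` are left out. -/
def T0 {m : ℕ} (σ : Ph m → ℂ) (G : Ee m → ℂ) (z : Ee m) : ℂ :=
  ∫ W : Ph m, cexp (I * (dotp W.1 W.2 : ℂ)) * AA σ G W z

lemma SGk.integrable_T0 {m : ℕ} {D : ℝ} {G : Ee m → ℂ} (hG : SGk D G) {σ : Ph m → ℂ} (hσ : Tst σ)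
    {z : Ee m} (hz : z ∈ Qd m) :
    Integrable fun W : Ph m => cexp (I * (dotp W.1 W.2 : ℂ)) * AA σ G W z := by
  obtain ⟨C, -, hC⟩ := AA_int hG.xb0 hσ
  refine ((integrable_wtW m).const_mul (C * jap z.2 ^ D)).mono' ?_ (ae_of_all _ fun W => ?_)
  · refine AEStronglyMeasurable.mul ?_ (continuous_AA hG.1 hσ hz).aestronglyMeasurable
    exact Continuous.aestronglyMeasurable (by fun_prop)
  · rw [norm_mul, norm_cexp_I, one_mul]
    simpa using hC W z hz

lemma SGk.hasGrad_T0 {m : ℕ} {D : ℝ} {G : Ee m → ℂ} (hG : SGk D G) {σ : Ph m → ℂ} (hσ : Tst σ)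
    {z : Ee m} (hz : z ∈ Qd m) :
    HasFDerivWithinAt (T0 σ G) (gradL fun i => T0 σ (dd i G) z) (Qd m) z := by
  choose C hC0 hC using fun i => AA_int (hG.der i).xb0 hσ
  choose B hB0 hB using fun i : Ix m => jap_rpow_local (D + wt i) z
  unfold T0
  refine hasGrad_integral (F := fun W z => cexp (I * (dotp W.1 W.2 : ℂ)) * AA σ G W z)
    (F' := fun i W z => cexp (I * (dotp W.1 W.2 : ℂ)) * AA σ (dd i G) W z)
    (bound := fun W => ∑ i, C i * B i * (1 + ‖W‖) ^ (-(2 * m + 1 : ℝ)))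
    hz ?_ ?_ ?_ ?_ ?_
  · intro W w hw
    have h3 := (hG.hasGrad_AA hσ W hw).const_mul (cexp (I * (dotp W.1 W.2 : ℂ)))
    rw [← gradL_mul] at h3
    exact h3
  · intro i W w hw hwz
    rw [norm_mul, norm_cexp_I, one_mul]
    have h1 := hC i W w hw
    simp only [pow_zero, one_mul] at h1
    have hW := norm_nonneg W
    have h2 : ‖AA σ (dd i G) W w‖ ≤ C i * B i * (1 + ‖W‖) ^ (-(2 * m + 1 : ℝ)) := by
      refine h1.trans ?_
      have := hB i w hwz
      have := hC0 i
      gcongr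
    refine h2.trans (Finset.single_le_sum (f := fun i => C i * B i * (1 + ‖W‖) ^ (-(2 * m + 1 : ℝ)))
      (fun j _ => ?_) (Finset.mem_univ i))
    have := hC0 j
    have := hB0 j
    positivity
  · exact integrable_finsetSum _ fun i _ => (integrable_wtW m).const_mul _
  · intro w hw
    exact hG.integrable_T0 hσ hw
  · intro i
    exact (hG.der i).integrable_T0 hσ hz

/-- Smoothness of `T0 σ G`, by induction on the order: its partial derivatives are again of the form
`T0 σ H`. -/
lemma SGk.smo_T0 {m : ℕ} {D : ℝ} {G : Ee m → ℂ} (hG : SGk D G) {σ : Ph m → ℂ} (hσ : Tst σ) :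
    Smo (T0 σ G) := by
  have key : ∀ n : ℕ, ∀ {D : ℝ} {G : Ee m → ℂ}, SGk D G → ContDiffOn ℝ n (T0 σ G) (Qd m) := by
    intro n
    induction n with
    | zero =>
      intro D G hG
      rw [Nat.cast_zero, contDiffOn_zero]
      exact fun z hz => (hG.hasGrad_T0 hσ hz).continuousWithinAt
    | succ n ih =>
      intro D G hG
      rw [Nat.cast_succ, contDiffOn_succ_iff_fderivWithin (uniqueDiffOn_Qd m)]
      refine ⟨fun z hz => (hG.hasGrad_T0 hσ hz).differentiableWithinAt, by simp, ?_⟩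
      have : Set.EqOn (fderivWithin ℝ (T0 σ G) (Qd m)) (fun z => gradL fun i => T0 σ (dd i G) z)
          (Qd m) := fun z hz => (hG.hasGrad_T0 hσ hz).fderivWithin (uniqueDiffOn_Qd m z hz)
      refine ContDiffOn.congr ?_ this
      unfold gradL
      refine ContDiffOn.sum fun i _ => ?_
      exact contDiffOn_const.smulRight (ih (hG.der i))
  exact contDiffOn_infty.2 fun n => key n hG

lemma SGk.dd_T0 {m : ℕ} {D : ℝ} {G : Ee m → ℂ} (hG : SGk D G) {σ : Ph m → ℂ} (hσ : Tst σ)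
    (i : Ix m) : Set.EqOn (dd i (T0 σ G)) (T0 σ (dd i G)) (Qd m) := by
  intro z hz
  unfold dd
  rw [(hG.hasGrad_T0 hσ hz).fderivWithin (uniqueDiffOn_Qd m z hz), gradL_apply_bas]
  rfl

lemma SGk.derL {m : ℕ} {D : ℝ} {G : Ee m → ℂ} (hG : SGk D G) (L : List (Ix m)) :
    SGk (D + wtL L) (ddL L G) := by
  induction L with
  | nil => simpa [wtL, ddL] using hG
  | cons i L ih =>
    have := ih.der i
    rw [ddL_cons]
    have e : D + wtL (i :: L) = D + wtL L + wt i := by simp [wtL]; ring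
    rwa [e]

lemma SGk.ddL_T0 {m : ℕ} {D : ℝ} {G : Ee m → ℂ} (hG : SGk D G) {σ : Ph m → ℂ} (hσ : Tst σ)
    (L : List (Ix m)) : Set.EqOn (ddL L (T0 σ G)) (T0 σ (ddL L G)) (Qd m) := by
  induction L with
  | nil => exact fun _ _ => rfl
  | cons i L ih =>
    intro z hz
    rw [ddL_cons, dd_congr ih i hz, (hG.derL L).dd_T0 hσ i hz]
    rfl

/-- The adjoint construction preserves the symbol-kernel classes. -/
lemma SGk.T0 {m : ℕ} {D : ℝ} {G : Ee m → ℂ} (hG : SGk D G) {σ : Ph m → ℂ} (hσ : Tst σ) :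
    SGk D (T0 σ G) := by
  refine ⟨hG.smo_T0 hσ, fun L l l' => ?_⟩
  obtain ⟨C, -, hC⟩ := AA_int (hG.xb L l l') hσ
  refine ⟨∫ W : Ph m, C * (1 + ‖W‖) ^ (-(2 * m + 1 : ℝ)), fun z hz => ?_⟩
  rw [hG.ddL_T0 hσ L hz]
  unfold _root_.T0
  rw [← integral_const_mul, ← integral_mul_const]
  refine norm_integral_le_of_norm_le (((integrable_wtW m).const_mul C).mul_const _)
    (ae_of_all _ fun W => ?_)
  have h1 := hC W z hz
  rw [mul_left_comm, norm_mul, norm_cexp_I, one_mul]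
  refine h1.trans (le_of_eq ?_)
  ring

/-! ### The adjoint identity for fixed normal variables -/

/-- Invariance of Lebesgue measure on phase space under `P ↦ -P`, needed for the substitutions
`Z ↦ P - Z`. -/
instance isNegInvariantPh (m : ℕ) : (volume : Measure (Ph m)).IsNegInvariant := by
  have := isAddHaarPh m
  have : (volume : Measure (Ph m)).Regular :=
    Measure.Regular.of_sigmaCompactSpace_of_isLocallyFiniteMeasure _
  exact Measure.IsAddHaarMeasure.isNegInvariant_of_regular (μ := (volume : Measure (Ph m)))

/-- A smooth non-negative cut-off of integral one on phase space. -/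
def rho (m : ℕ) : Ph m → ℝ :=
  (⟨1, 2, one_pos, one_lt_two⟩ : ContDiffBump (0 : Ph m)).normed volume

/-- The cut-off twisted by the phase `e^{i x·ξ}`. With this choice the phases in `T0` combine, in the
variables `P` and `V = W - P = (y, η)`, to the single factor `e^{i y·η}`. -/
def sig0 (m : ℕ) (P : Ph m) : ℂ := cexp (I * (dotp P.1 P.2 : ℂ)) * (rho m P : ℂ)

lemma continuous_rho (m : ℕ) : Continuous (rho m) := ContDiffBump.continuous_normed _

lemma hasCompactSupport_rho (m : ℕ) : HasCompactSupport (rho m) :=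
  ContDiffBump.hasCompactSupport_normed _

lemma integral_rho (m : ℕ) : ∫ P, rho m P = 1 := ContDiffBump.integral_normed _

lemma tst_sig0 (m : ℕ) : Tst (sig0 m) := by
  refine ⟨?_, ?_⟩
  · unfold sig0
    refine ContDiff.mul ?_ ?_
    · have h1 : ∀ i : Fin m, ContDiff ℝ (⊤ : ℕ∞) fun P : Ph m => P.1 i * P.2 i := fun i => by
        fun_prop
      have h2 : ContDiff ℝ (⊤ : ℕ∞) fun P : Ph m => dotp P.1 P.2 := ContDiff.sum fun i _ => h1 i
      exact (contDiff_const.mul (Complex.ofRealCLM.contDiff.comp h2)).cexp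
    · exact Complex.ofRealCLM.contDiff.comp (ContDiffBump.contDiff_normed _)
  · unfold sig0
    refine HasCompactSupport.mul_left ?_
    exact (hasCompactSupport_rho m).comp_left (g := fun x : ℝ => (x : ℂ)) (by simp)

/-- A product `F(P) B(Z)` stays integrable after a measure-preserving substitution in `Z` that depends
on `P`. -/
lemma integrable_shear {m : ℕ} {F B : Ph m → ℂ} (hFc : Continuous F) (hBc : Continuous B)
    (hF : Integrable F) (hB : Integrable B) {e : Ph m → Ph m → Ph m}
    (he : Continuous fun p : Ph m × Ph m => e p.1 p.2)
    (hm : ∀ P, MeasurePreserving (e P) volume volume) :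
    Integrable (fun p : Ph m × Ph m => F p.1 * B (e p.1 p.2))
      ((volume : Measure (Ph m)).prod volume) := by
  have hc : Continuous fun p : Ph m × Ph m => F p.1 * B (e p.1 p.2) :=
    (hFc.comp continuous_fst).mul (hBc.comp he)
  rw [integrable_prod_iff hc.aestronglyMeasurable]
  refine ⟨ae_of_all _ fun P => ?_, ?_⟩
  · have h1 : Integrable (fun Z => B (e P Z)) :=
      (hm P).integrable_comp hBc.aestronglyMeasurable |>.2 hB
    exact h1.const_mul (F P)
  · have : ∀ P, ∫ Z, ‖F P * B (e P Z)‖ = ‖F P‖ * ∫ Z, ‖B Z‖ := by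
      intro P
      simp only [norm_mul]
      rw [integral_const_mul]
      congr 1
      have h1 := (hm P).map_eq
      conv_rhs => rw [← h1]
      rw [integral_map (hm P).measurable.aemeasurable hBc.norm.aestronglyMeasurable]
    simp only [this]
    exact hF.norm.mul_const _

lemma dotp_sub_sub {m : ℕ} (a b c d : Eu m) :
    dotp (a - b) (c - d) = dotp a c - dotp a d - dotp b c + dotp b d := by
  simp only [dotp, Pi.sub_apply, ← Finset.sum_sub_distrib, ← Finset.sum_add_distrib]
  exact Finset.sum_congr rfl fun i _ => by ring

lemma dotp_comm {m : ℕ} (a b : Eu m) : dotp a b = dotp b a := by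
  simp only [dotp, mul_comm]

/-- The integral over the output variables of the oscillatory factor evaluates by Fourier
inversion. -/
lemma inner_eval {m : ℕ} {f h : Eu m → ℂ}
    (hinv : ∀ x, ∫ ξ, cexp (I * (dotp x ξ : ℂ)) * pF h ξ = ((2 * Real.pi) ^ m : ℝ) * h x)
    (Q : Ph m) :
    ∫ X : Ph m, cexp (-(I * (dotp X.1 X.2 : ℂ))) * (f X.1 * (starRingEnd ℂ) (pF h X.2)) *
        cexp (I * (dotp (X.1 - Q.1) (X.2 - Q.2) : ℂ)) =
      ((2 * Real.pi) ^ m : ℝ) * (cexp (I * (dotp Q.1 Q.2 : ℂ)) *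
        (pF f Q.2 * (starRingEnd ℂ) (h Q.1))) := by
  have e1 : ∀ X : Ph m, cexp (-(I * (dotp X.1 X.2 : ℂ))) *
      (f X.1 * (starRingEnd ℂ) (pF h X.2)) * cexp (I * (dotp (X.1 - Q.1) (X.2 - Q.2) : ℂ)) =
      (cexp (I * (dotp Q.1 Q.2 : ℂ)) * (cexp (-(I * (dotp X.1 Q.2 : ℂ))) * f X.1)) *
        (starRingEnd ℂ) (cexp (I * (dotp Q.1 X.2 : ℂ)) * pF h X.2) := by
    intro X
    rw [map_mul, ← Complex.exp_conj, map_mul, Complex.conj_I, Complex.conj_ofReal, dotp_sub_sub]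
    have : cexp (I * ((dotp X.1 X.2 - dotp X.1 Q.2 - dotp Q.1 X.2 + dotp Q.1 Q.2 : ℝ) : ℂ)) =
        cexp (I * (dotp X.1 X.2 : ℂ)) * cexp (-(I * (dotp X.1 Q.2 : ℂ))) *
          cexp (-I * (dotp Q.1 X.2 : ℂ)) * cexp (I * (dotp Q.1 Q.2 : ℂ)) := by
      rw [← Complex.exp_add, ← Complex.exp_add, ← Complex.exp_add]
      congr 1
      push_cast
      ring
    rw [this]
    have h0 : cexp (-(I * (dotp X.1 X.2 : ℂ))) * cexp (I * (dotp X.1 X.2 : ℂ)) = 1 := by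
      rw [← Complex.exp_add]; simp
    linear_combination (f X.1 * (starRingEnd ℂ) (pF h X.2) * cexp (-(I * (dotp X.1 Q.2 : ℂ))) *
          cexp (-I * (dotp Q.1 X.2 : ℂ)) * cexp (I * (dotp Q.1 Q.2 : ℂ))) * h0
  simp only [e1]
  have e2 := integral_prod_mul (μ := (volume : Measure (Eu m))) (ν := (volume : Measure (Eu m)))
    (fun y => cexp (I * (dotp Q.1 Q.2 : ℂ)) * (cexp (-(I * (dotp y Q.2 : ℂ))) * f y))
    (fun ξ => (starRingEnd ℂ) (cexp (I * (dotp Q.1 ξ : ℂ)) * pF h ξ))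
  refine e2.trans ?_
  rw [integral_const_mul, integral_conj, hinv, map_mul, Complex.conj_ofReal]
  unfold pF
  ring

/-- The adjoint identity for frozen normal variables: `f` and `h` are the slices of `u` and `v`.

Writing `W = X + Z` in the definition of `T0`, the kernel is evaluated at the point `P - Z`, which
does not involve `X`. The integral over `X` is then evaluated by `inner_eval` as the integrand `B`
of the left side at `P - Z`. The integral over `Z` gives `∫ B` for every `P`, and the cut-off has
integral one. Absolute convergence holds for `(X, Z)` after integration in `P`, for `(X, P)` with
`Z` fixed, and for `(P, Z)` after integration in `X`, but not for the triple integral. -/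
lemma adj_core {m : ℕ} {D : ℝ} {G : Ee m → ℂ} (hG : SGk D G) {z0 : Ee m} (hz0 : z0 ∈ Qd m)
    (hz2 : z0.2 = 0) {f h : Eu m → ℂ} (hf : Continuous f) (hh : Continuous h)
    (hfi : Integrable f) (hhi : Integrable h)
    (hpf : Continuous (pF f)) (hph : Continuous (pF h)) (hphi : Integrable (pF h))
    (hpfD : Integrable fun ξ => ((jap ξ ^ D : ℝ) : ℂ) * pF f ξ)
    (hphD : Integrable fun ξ => ((jap ξ ^ D : ℝ) : ℂ) * pF h ξ)
    (hinv : ∀ x, ∫ ξ, cexp (I * (dotp x ξ : ℂ)) * pF h ξ = ((2 * Real.pi) ^ m : ℝ) * h x) :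
    ∫ Q : Ph m, cexp (I * (dotp Q.1 Q.2 : ℂ)) * G (z0 + iota Q) *
        (pF f Q.2 * (starRingEnd ℂ) (h Q.1)) =
      (((2 * Real.pi) ^ m : ℝ) : ℂ)⁻¹ * ∫ X : Ph m, cexp (-(I * (dotp X.1 X.2 : ℂ))) *
        T0 (sig0 m) G (z0 + iota X) * (f X.1 * (starRingEnd ℂ) (pF h X.2)) := by
  have hpi : (((2 * Real.pi) ^ m : ℝ) : ℂ) ≠ 0 := by
    rw [Complex.ofReal_ne_zero]; positivity
  have hjc : Continuous fun ξ : Eu m => jap ξ ^ D := by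
    refine Continuous.rpow_const ?_ fun ξ => Or.inl (jap_pos ξ).ne'
    unfold jap
    fun_prop
  have hbc : Continuous fun Q : Ph m => G (z0 + iota Q) := hG.1.continuous_shift hz0 continuous_id
  set B : Ph m → ℂ := fun Q => cexp (I * (dotp Q.1 Q.2 : ℂ)) * G (z0 + iota Q) *
        (pF f Q.2 * (starRingEnd ℂ) (h Q.1)) with hB
  have hconj : Continuous (starRingEnd ℂ : ℂ → ℂ) := Complex.continuous_conj
  have hBc : Continuous B := by
    refine ((by fun_prop : Continuous fun Q : Ph m => cexp (I * (dotp Q.1 Q.2 : ℂ))).mul hbc).mul ?_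
    exact (hpf.comp continuous_snd).mul (hconj.comp (hh.comp continuous_fst))
  set φ : Ph m → ℂ := fun X => cexp (-(I * (dotp X.1 X.2 : ℂ))) *
    (f X.1 * (starRingEnd ℂ) (pF h X.2)) with hφ
  have hφc : Continuous φ := by
    refine (by fun_prop : Continuous fun Q : Ph m => cexp (-(I * (dotp Q.1 Q.2 : ℂ)))).mul ?_
    exact (hf.comp continuous_fst).mul (hconj.comp (hph.comp continuous_snd))
  obtain ⟨C0, hC0⟩ := hG.xb0.2 []
  simp only [List.map_nil, ddL, List.foldr_nil, pow_zero, one_mul] at hC0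
  have hBi : Integrable B := by
    have h1 : Integrable (fun Q : Ph m => h Q.1 * (((jap Q.2 ^ D : ℝ) : ℂ) * pF f Q.2)) :=
      hhi.mul_prod hpfD
    refine (h1.norm.const_mul |C0|).mono' hBc.aestronglyMeasurable (ae_of_all _ fun Q => ?_)
    have h2 := hC0 _ (add_iota_mem hz0 Q)
    have h3 : (z0 + iota Q).2 = Q.2 := by simp [iota, hz2]
    rw [h3] at h2
    have hj := Real.rpow_nonneg (jap_pos Q.2).le D
    have h4 : ‖G (z0 + iota Q)‖ ≤ |C0| * jap Q.2 ^ D :=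
      h2.trans (mul_le_mul_of_nonneg_right (le_abs_self _) hj)
    simp only [hB, norm_mul, norm_cexp_I, one_mul, RCLike.norm_conj, Complex.norm_real,
      Real.norm_of_nonneg hj]
    calc ‖G (z0 + iota Q)‖ * (‖pF f Q.2‖ * ‖h Q.1‖) ≤
        (|C0| * jap Q.2 ^ D) * (‖pF f Q.2‖ * ‖h Q.1‖) := by gcongr
      _ = _ := by ring
  have hφi : Integrable φ := by
    have h1 : Integrable (fun Q : Ph m => f Q.1 * pF h Q.2) := hfi.mul_prod hphi
    refine h1.norm.mono' hφc.aestronglyMeasurable (ae_of_all _ fun Q => ?_)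
    simp only [hφ, norm_mul, norm_cexp_neg_I, one_mul, RCLike.norm_conj, le_refl]
  have hφD : Integrable (fun X : Ph m => ((jap X.2 ^ D : ℝ) : ℂ) * φ X) := by
    have h1 : Integrable (fun Q : Ph m => f Q.1 * (((jap Q.2 ^ D : ℝ) : ℂ) * pF h Q.2)) :=
      hfi.mul_prod hphD
    refine h1.norm.mono' ?_ (ae_of_all _ fun Q => ?_)
    · exact ((Complex.continuous_ofReal.comp (hjc.comp continuous_snd)).mul hφc).aestronglyMeasurable
    · simp only [hφ, norm_mul, norm_cexp_neg_I, one_mul, RCLike.norm_conj]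
      refine le_of_eq (by ring)
  -- the full integrand in the variables `X`, `Z = W - X` and `P`
  set k : Ph m → Ph m → Ph m → ℂ := fun X Z P => φ X * (cexp (I * (dotp (X + Z).1 (X + Z).2 : ℂ)) *
    (cexp (-(I * (pairP P (X + Z) : ℂ))) * (sig0 m P * G (z0 + iota (P - Z))))) with hk
  have hAA : ∀ X Z, AA (sig0 m) G (X + Z) (z0 + iota X) =
      ∫ P, cexp (-(I * (pairP P (X + Z) : ℂ))) * (sig0 m P * G (z0 + iota (P - Z))) := by
    intro X Z
    unfold AA
    congr 1
    funext P
    have : z0 + iota X + iota (P - (X + Z)) = z0 + iota (P - Z) := by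
      simp [iota, add_assoc]
      constructor <;> abel
    rw [this]
  have s1 : ∀ X : Ph m, cexp (-(I * (dotp X.1 X.2 : ℂ))) *
      T0 (sig0 m) G (z0 + iota X) * (f X.1 * (starRingEnd ℂ) (pF h X.2)) =
      ∫ Z, ∫ P, k X Z P := by
    intro X
    have h1 : T0 (sig0 m) G (z0 + iota X) = ∫ Z, cexp (I * (dotp (X + Z).1 (X + Z).2 : ℂ)) *
        AA (sig0 m) G (X + Z) (z0 + iota X) := by
      unfold T0
      exact (integral_add_left_eq_self (fun W : Ph m => cexp (I * (dotp W.1 W.2 : ℂ)) *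
        AA (sig0 m) G W (z0 + iota X)) X).symm
    rw [h1, mul_right_comm, ← integral_const_mul]
    congr 1
    funext Z
    rw [hAA, ← integral_const_mul, ← integral_const_mul]
  have hkm : StronglyMeasurable fun p : Ph m × Ph m => ∫ P, k p.1 p.2 P := by
    refine StronglyMeasurable.integral_prod_right' (ν := (volume : Measure (Ph m)))
      (f := fun p : (Ph m × Ph m) × Ph m => k p.1.1 p.1.2 p.2) ?_
    refine Continuous.stronglyMeasurable ?_
    refine (hφc.comp (continuous_fst.comp continuous_fst)).mul ?_
    refine Continuous.mul (by fun_prop) (Continuous.mul (by fun_prop) ?_)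
    refine ((tst_sig0 m).1.continuous.comp continuous_snd).mul ?_
    exact hG.1.continuous_shift hz0 (by fun_prop)
  have i1 : Integrable (fun p : Ph m × Ph m => ∫ P, k p.1 p.2 P)
      ((volume : Measure (Ph m)).prod volume) := by
    obtain ⟨C, hC0', hC⟩ := AA_int hG.xb0 (tst_sig0 m)
    have hwc : Continuous fun W : Ph m => (((1 + ‖W‖) ^ (-(2 * m + 1 : ℝ)) : ℝ) : ℂ) := by
      refine Complex.continuous_ofReal.comp (Continuous.rpow_const (by fun_prop) fun W => Or.inl ?_)
      have := norm_nonneg W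
      positivity
    have h1 := integrable_shear (e := fun X Z => X + Z)
      ((Complex.continuous_ofReal.comp (hjc.comp continuous_snd)).mul hφc) hwc hφD
      (integrable_wtW m).ofReal (by fun_prop) (fun P => measurePreserving_add_left volume P)
    refine (h1.norm.const_mul C).mono' hkm.aestronglyMeasurable (ae_of_all _ fun p => ?_)
    have h2 := hC (p.1 + p.2) _ (add_iota_mem hz0 p.1)
    have h3 : (z0 + iota p.1).2 = p.1.2 := by simp [iota, hz2]
    rw [h3] at h2
    simp only [pow_zero, one_mul] at h2
    have hj := Real.rpow_nonneg (jap_pos p.1.2).le D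
    have hw : 0 ≤ (1 + ‖p.1 + p.2‖) ^ (-(2 * m + 1 : ℝ)) :=
      Real.rpow_nonneg (by have := norm_nonneg (p.1 + p.2); linarith) _
    simp only [hk]
    rw [integral_const_mul, integral_const_mul, ← hAA, norm_mul (φ p.1), norm_mul (cexp (I * _)),
      norm_cexp_I, one_mul]
    simp only [Function.comp_apply, norm_mul, Complex.norm_real, Real.norm_of_nonneg hj,
      Real.norm_of_nonneg hw, Pi.mul_apply]
    calc ‖φ p.1‖ * ‖AA (sig0 m) G (p.1 + p.2) (z0 + iota p.1)‖ ≤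
        ‖φ p.1‖ * (C * jap p.1.2 ^ D * (1 + ‖p.1 + p.2‖) ^ (-(2 * m + 1 : ℝ))) := by gcongr
      _ = _ := by ring
  have s2 : ∀ Z, ∫ X, ∫ P, k X Z P = ∫ P, ((rho m P : ℂ) * B (P - Z)) * ((2 * Real.pi) ^ m : ℝ) := by
    intro Z
    have i2 : Integrable (fun p : Ph m × Ph m => k p.1 Z p.2)
        ((volume : Measure (Ph m)).prod volume) := by
      have h1 : Integrable (fun P : Ph m => sig0 m P * G (z0 + iota (P - Z))) := by
        refine Continuous.integrable_of_hasCompactSupport ?_ (tst_sig0 m).2.mul_right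
        exact (tst_sig0 m).1.continuous.mul (hG.1.continuous_shift hz0 (by fun_prop))
      have h2 := hφi.mul_prod h1
      refine h2.norm.mono' ?_ (ae_of_all _ fun p => ?_)
      · refine Continuous.aestronglyMeasurable ?_
        refine (hφc.comp continuous_fst).mul ?_
        refine Continuous.mul (by fun_prop) (Continuous.mul (by fun_prop) ?_)
        refine ((tst_sig0 m).1.continuous.comp continuous_snd).mul ?_
        exact hG.1.continuous_shift hz0 (by fun_prop)
      · simp only [hk, norm_mul, norm_cexp_I, norm_cexp_neg_I, one_mul, le_refl]
    rw [integral_integral_swap i2]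
    congr 1
    funext P
    have e1 : ∀ X, k X Z P = ((rho m P : ℂ) * G (z0 + iota (P - Z))) *
        (cexp (-(I * (dotp X.1 X.2 : ℂ))) * (f X.1 * (starRingEnd ℂ) (pF h X.2)) *
        cexp (I * (dotp (X.1 - (P - Z).1) (X.2 - (P - Z).2) : ℂ))) := by
      intro X
      have h1 : cexp (I * (dotp (X.1 - (P - Z).1) (X.2 - (P - Z).2) : ℂ)) =
          cexp (I * (dotp (X + Z).1 (X + Z).2 : ℂ)) * cexp (-(I * (pairP P (X + Z) : ℂ))) *
            cexp (I * (dotp P.1 P.2 : ℂ)) := by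
        rw [← Complex.exp_add, ← Complex.exp_add]
        congr 1
        have : dotp (X.1 - (P - Z).1) (X.2 - (P - Z).2) = dotp (X + Z).1 (X + Z).2 -
            pairP P (X + Z) + dotp P.1 P.2 := by
          rw [show X.1 - (P - Z).1 = (X + Z).1 - P.1 by simp; abel,
            show X.2 - (P - Z).2 = (X + Z).2 - P.2 by simp; abel, dotp_sub_sub, pairP,
            dotp_comm (X + Z).1 P.2]
          ring
        rw [this]
        push_cast
        ring
      rw [h1]
      simp only [hk, hφ, sig0]
      ring
    simp only [e1]
    rw [integral_const_mul, inner_eval hinv]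
    simp only [hB]
    ring
  have i3 : Integrable (fun p : Ph m × Ph m => (rho m p.1 : ℂ) * B (p.1 - p.2))
      ((volume : Measure (Ph m)).prod volume) := by
    refine integrable_shear (F := fun P => (rho m P : ℂ)) (e := fun P Z => P - Z)
      (Complex.continuous_ofReal.comp (continuous_rho m)) hBc ?_ hBi (by fun_prop)
      (fun P => Measure.measurePreserving_sub_left volume P)
    exact ((continuous_rho m).integrable_of_hasCompactSupport (hasCompactSupport_rho m)).ofReal
  simp only [s1]
  rw [integral_integral_swap i1]
  simp only [s2, integral_mul_const]
  rw [← integral_integral_swap i3]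
  have hsub : ∀ P, ∫ Z, B (P - Z) = ∫ Z, B Z := fun P => by
    have h1 := (Measure.measurePreserving_sub_left (volume : Measure (Ph m)) P).map_eq
    conv_rhs => rw [← h1]
    rw [integral_map (by fun_prop) hBc.aestronglyMeasurable]
  simp only [integral_const_mul, hsub]
  have hr : ∫ P : Ph m, (rho m P : ℂ) = 1 := by
    rw [integral_complex_ofReal, integral_rho, Complex.ofReal_one]
  rw [integral_mul_const, hr]
  field_simp

/-! ### Partial Fourier transforms of Schwartz functions -/

/-- Fourier inversion in the normalisation of `pF`. -/
lemma pF_inversion {m : ℕ} {f : Eu m → ℂ} (hf : Continuous f) (hfi : Integrable f)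
    (hpi : Integrable (pF f)) (x : Eu m) :
    ∫ ξ, cexp (I * (dotp x ξ : ℂ)) * pF f ξ = ((2 * Real.pi) ^ m : ℝ) * f x := by
  have hpos : (0 : ℝ) < 2 * Real.pi := by positivity
  have mp := PiLp.volume_preserving_toLp (Fin m)
  have me := (MeasurableEquiv.toLp 2 (Fin m → ℝ)).measurableEmbedding
  set F : EuclideanSpace ℝ (Fin m) → ℂ := fun w => f w.ofLp with hF
  have hFF : ∀ w : EuclideanSpace ℝ (Fin m),
      FourierTransform.fourier F w = pF f ((2 * Real.pi) • w.ofLp) := by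
    intro w
    rw [Real.fourier_eq', ← mp.integral_comp me]
    unfold pF
    congr 1
    funext y
    rw [smul_eq_mul]
    congr 2
    simp only [PiLp.inner_apply, dotp, Pi.smul_apply, smul_eq_mul]
    push_cast
    simp only [Finset.mul_sum, Finset.sum_mul, ← Finset.sum_neg_distrib]
    refine Finset.sum_congr rfl fun i _ => ?_
    simp
    ring
  have hFc : Continuous F := hf.comp (PiLp.continuous_ofLp 2 _)
  have hFi : Integrable F := by
    rw [← mp.integrable_comp_emb me]
    exact hfi
  have hFFi : Integrable (FourierTransform.fourier F) := by
    rw [← mp.integrable_comp_emb me]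
    have h1 : (FourierTransform.fourier F) ∘ (WithLp.toLp 2) =
        fun y : Eu m => pF f ((2 * Real.pi) • y) := by
      funext y; exact hFF _
    rw [h1]
    exact hpi.comp_smul hpos.ne'
  have key := congrFun (hFc.fourierInv_fourier_eq hFi hFFi) (WithLp.toLp 2 x)
  rw [Real.fourierInv_eq', ← mp.integral_comp me] at key
  have h2 := Measure.integral_comp_smul (volume : Measure (Eu m))
    (fun ξ => cexp (I * (dotp x ξ : ℂ)) * pF f ξ) (2 * Real.pi)
  have h3 : ∀ y : Eu m, cexp (↑(2 * Real.pi * inner ℝ (WithLp.toLp 2 y) (WithLp.toLp 2 x)) * I) •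
      FourierTransform.fourier F (WithLp.toLp 2 y) =
      cexp (I * (dotp x ((2 * Real.pi) • y) : ℂ)) * pF f ((2 * Real.pi) • y) := by
    intro y
    rw [hFF, smul_eq_mul]
    congr 2
    simp only [PiLp.inner_apply, dotp, Pi.smul_apply, smul_eq_mul]
    push_cast
    simp only [Finset.mul_sum, Finset.sum_mul]
    refine Finset.sum_congr rfl fun i _ => ?_
    simp
    ring
  simp only [h3] at key
  rw [h2] at key
  have h4 : f x = F (WithLp.toLp 2 x) := rfl
  rw [h4, ← key]
  have h5 : ((2 * Real.pi) ^ m : ℝ) ≠ 0 := by positivity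
  simp only [Module.finrank_fintype_fun_eq_card, Fintype.card_fin]
  rw [abs_of_nonneg (by positivity), Complex.real_smul, ← mul_assoc, ← Complex.ofReal_mul,
    mul_inv_cancel₀ h5]
  simp

/-- The embedding of the boundary variables as a linear map. -/
def snL (m : ℕ) : Eu m →L[ℝ] Eu (m + 1) :=
  LinearMap.toContinuousLinearMap
    { toFun := fun y => Fin.snoc (α := fun _ => ℝ) y 0
      map_add' := fun x y => by
        ext i
        refine Fin.lastCases ?_ (fun j => ?_) i <;> simp
      map_smul' := fun c y => by
        ext i
        refine Fin.lastCases ?_ (fun j => ?_) i <;> simp }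

lemma snoc_eq_snL {m : ℕ} (y : Eu m) (t : ℝ) :
    (Fin.snoc y t : Eu (m + 1)) = snL m y + Fin.snoc (0 : Eu m) t := by
  ext i
  refine Fin.lastCases ?_ (fun j => ?_) i <;> simp [snL]

lemma continuous_snoc {m : ℕ} {X : Type*} [TopologicalSpace X] {f : X → Eu m} {g : X → ℝ}
    (hf : Continuous f) (hg : Continuous g) :
    Continuous fun x => (Fin.snoc (f x) (g x) : Eu (m + 1)) :=
  Continuous.finSnoc hf hg

lemma norm_fst_le_snoc {m : ℕ} (y : Eu m) (t : ℝ) : ‖y‖ ≤ ‖(Fin.snoc y t : Eu (m + 1))‖ := by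
  refine (pi_norm_le_iff_of_nonneg (norm_nonneg _)).2 fun i => ?_
  simpa using norm_le_pi_norm (Fin.snoc y t : Eu (m + 1)) i.castSucc

lemma abs_le_norm_snoc {m : ℕ} (y : Eu m) (t : ℝ) : |t| ≤ ‖(Fin.snoc y t : Eu (m + 1))‖ := by
  simpa using norm_le_pi_norm (Fin.snoc y t : Eu (m + 1)) (Fin.last m)

/-- The weight `(1+‖y‖)^{-k}`. -/
def dcy {E : Type*} [Norm E] (k : ℕ) (y : E) : ℝ := ((1 + ‖y‖) ^ k)⁻¹

lemma dcy_nonneg {E : Type*} [SeminormedAddCommGroup E] (k : ℕ) (y : E) : 0 ≤ dcy k y := by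
  unfold dcy
  have := norm_nonneg y
  positivity

lemma continuous_dcy {E : Type*} [SeminormedAddCommGroup E] (k : ℕ) :
    Continuous (dcy k : E → ℝ) := by
  unfold dcy
  refine Continuous.inv₀ (by fun_prop) fun y => ?_
  have := norm_nonneg y
  positivity

lemma integrable_dcy {E : Type*} [NormedAddCommGroup E] [NormedSpace ℝ E] [FiniteDimensional ℝ E]
    [MeasurableSpace E] [BorelSpace E] (μ : Measure E) [μ.IsAddHaarMeasure] (k : ℕ)
    (hk : Module.finrank ℝ E < k) : Integrable (dcy k : E → ℝ) μ := by
  have := integrable_one_add_norm (E := E) (μ := μ) (r := k) (by exact_mod_cast hk)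
  refine this.congr (ae_of_all _ fun y => ?_)
  have h := norm_nonneg y
  simp only [dcy]
  rw [Real.rpow_neg (by positivity), Real.rpow_natCast]

/-- A Schwartz function is dominated by a product of integrable weights in the tangential and normal
variables. -/
lemma slice_bound {m : ℕ} (u : SchwartzMap (Eu (m + 1)) ℂ) :
    ∃ C, 0 ≤ C ∧ ∀ (y : Eu m) (t : ℝ), ‖u (Fin.snoc y t)‖ ≤ C * dcy (m + 1) y * dcy 2 t := by
  set C := 2 ^ (m + 3) * (Finset.Iic (m + 3, 0)).sup (fun q => SchwartzMap.seminorm ℝ q.1 q.2) u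
    with hC
  have h0 : ∀ x, (1 + ‖x‖) ^ (m + 3) * ‖u x‖ ≤ C := by
    intro x
    have := SchwartzMap.one_add_le_sup_seminorm_apply (𝕜 := ℝ) (m := (m + 3, 0)) (k := m + 3)
      (n := 0) le_rfl le_rfl u x
    simpa using this
  refine ⟨C, le_trans (by positivity) (h0 0), fun y t => ?_⟩
  have h1 := h0 (Fin.snoc y t)
  have h2 := norm_fst_le_snoc y t
  have h3 := abs_le_norm_snoc y t
  have hy := norm_nonneg y
  have ht := abs_nonneg t
  have h4 : (1 + ‖y‖) ^ (m + 1) * (1 + |t|) ^ 2 ≤ (1 + ‖(Fin.snoc y t : Eu (m + 1))‖) ^ (m + 3) := by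
    rw [show m + 3 = (m + 1) + 2 by ring,
      pow_add (1 + ‖(Fin.snoc y t : Eu (m + 1))‖) (m + 1) 2]
    gcongr
  unfold dcy
  rw [Real.norm_eq_abs, mul_assoc, ← mul_inv, ← div_eq_mul_inv, le_div_iff₀ (by positivity), mul_comm]
  exact (mul_le_mul_of_nonneg_right h4 (norm_nonneg _)).trans h1

lemma finrank_Eu (m : ℕ) : Module.finrank ℝ (Eu m) = m := by simp

lemma slice_cont {m : ℕ} (u : SchwartzMap (Eu (m + 1)) ℂ) (t : ℝ) :
    Continuous fun y : Eu m => u (Fin.snoc y t) :=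
  u.continuous.comp (continuous_snoc continuous_id continuous_const)

lemma slice_int {m : ℕ} (u : SchwartzMap (Eu (m + 1)) ℂ) (t : ℝ) :
    Integrable fun y : Eu m => u (Fin.snoc y t) := by
  obtain ⟨C, hC0, hC⟩ := slice_bound u
  refine (((integrable_dcy volume (m + 1) (by simp)).const_mul C).mul_const (dcy 2 t)).mono'
    (slice_cont u t).aestronglyMeasurable (ae_of_all _ fun y => hC y t)

lemma continuous_hatu {m : ℕ} (u : SchwartzMap (Eu (m + 1)) ℂ) :
    Continuous fun p : Eu m × ℝ => hatu (fun y => u y) p.1 p.2 := by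
  obtain ⟨C, hC0, hC⟩ := slice_bound u
  unfold hatu
  refine continuous_of_dominated (bound := fun y => C * dcy (m + 1) y) (fun p => ?_) (fun p => ?_)
    ((integrable_dcy volume (m + 1) (by simp)).const_mul C) (ae_of_all _ fun y => ?_)
  · exact (Continuous.mul (by fun_prop) (slice_cont u p.2)).aestronglyMeasurable
  · refine ae_of_all _ fun y => ?_
    rw [norm_mul, norm_cexp_neg_I, one_mul]
    refine (hC y p.2).trans (mul_le_of_le_one_right (mul_nonneg hC0 (dcy_nonneg _ _)) ?_)
    unfold dcy
    refine inv_le_one_of_one_le₀ (one_le_pow₀ ?_)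
    have := norm_nonneg p.2
    linarith
  · exact Continuous.mul (by fun_prop)
      (u.continuous.comp (continuous_snoc continuous_const continuous_snd))

/-- Integration by parts: the partial Fourier transform turns `∂_j` into `iξ_j`. -/
lemma hatu_parts {m : ℕ} (u : SchwartzMap (Eu (m + 1)) ℂ) (j : Fin m) (ξ : Eu m) (t : ℝ) :
    I * (ξ j : ℂ) * hatu (fun y => u y) ξ t =
      hatu (fun y => (LineDeriv.lineDerivOp (snL m (Pi.single j 1)) u : SchwartzMap _ ℂ) y) ξ t := by
  set e : Eu m → ℂ := fun y => cexp (-(I * (dotp y ξ : ℂ))) with he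
  set g : Eu m → ℂ := fun y => u (Fin.snoc y t) with hg
  have hdot : ∀ y : Eu m, HasFDerivAt (fun y : Eu m => dotp y ξ)
      (∑ i, ξ i • (ContinuousLinearMap.proj i : Eu m →L[ℝ] ℝ)) y := by
    intro y
    have : (fun y : Eu m => dotp y ξ) =
        (∑ i, ξ i • (ContinuousLinearMap.proj i : Eu m →L[ℝ] ℝ) : Eu m →L[ℝ] ℝ) := by
      funext y
      simp [dotp, mul_comm]
    rw [this]
    exact ContinuousLinearMap.hasFDerivAt _
  have he1 : ∀ y, HasFDerivAt e (cexp (-(I * (dotp y ξ : ℂ))) • -(I •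
      (Complex.ofRealCLM.comp (∑ i, ξ i • (ContinuousLinearMap.proj i : Eu m →L[ℝ] ℝ))))) y := by
    intro y
    exact (((Complex.ofRealCLM.hasFDerivAt.comp y (hdot y)).const_mul I).neg).cexp
  have he2 : ∀ y, fderiv ℝ e y (Pi.single j 1) = -(I * (ξ j : ℂ)) * e y := by
    intro y
    rw [(he1 y).fderiv]
    simp [he, Pi.single_apply]
    ring
  have hg1 : ∀ y, HasFDerivAt g ((fderiv ℝ u (Fin.snoc y t)).comp (snL m)) y := by
    intro y
    have h1 : HasFDerivAt (fun y : Eu m => (Fin.snoc y t : Eu (m + 1))) (snL m) y := by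
      have h2 : (fun y : Eu m => (Fin.snoc y t : Eu (m + 1))) =
          fun y => snL m y + Fin.snoc (0 : Eu m) t := funext fun y => snoc_eq_snL y t
      rw [h2]
      exact (snL m).hasFDerivAt.add_const _
    exact (u.differentiableAt.hasFDerivAt).comp y h1
  set du := (LineDeriv.lineDerivOp (snL m (Pi.single j 1)) u : SchwartzMap (Eu (m + 1)) ℂ) with hdu
  have hg2 : ∀ y, fderiv ℝ g y (Pi.single j 1) = du (Fin.snoc y t) := by
    intro y
    rw [(hg1 y).fderiv]
    rfl
  have hint : ∀ w : SchwartzMap (Eu (m + 1)) ℂ, Integrable fun y => e y * w (Fin.snoc y t) := by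
    intro w
    refine (slice_int w t).norm.mono' (Continuous.mul (by fun_prop) (slice_cont w t)).aestronglyMeasurable
      (ae_of_all _ fun y => ?_)
    simp only [he]
    rw [norm_mul, norm_cexp_neg_I, one_mul]
  have e4 : ∀ y, fderiv ℝ e y (Pi.single j 1) * g y = -(I * (ξ j : ℂ)) * (e y * g y) := by
    intro y; rw [he2]; ring
  have key := integral_mul_fderiv_eq_neg_fderiv_mul_of_integrable (μ := volume) (f := e) (g := g)
    (v := Pi.single j 1) (by simp only [e4]; exact (hint u).const_mul _)
    (by simp only [hg2]; exact hint du) (hint u) (fun y _ => (he1 y).differentiableAt)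
    (fun y _ => (hg1 y).differentiableAt)
  simp only [e4, hg2] at key
  rw [integral_const_mul] at key
  unfold hatu
  rw [key]
  ring

lemma norm_le_sum_abs {m : ℕ} (ξ : Eu m) : ‖ξ‖ ≤ ∑ j, |ξ j| := by
  refine (pi_norm_le_iff_of_nonneg (Finset.sum_nonneg fun _ _ => abs_nonneg _)).2 fun i => ?_
  exact Finset.single_le_sum (f := fun j => |ξ j|) (fun _ _ => abs_nonneg _) (Finset.mem_univ i)

/-- Rapid decay of the partial Fourier transform. -/
lemma hatu_decay {m : ℕ} (M : ℕ) : ∀ u : SchwartzMap (Eu (m + 1)) ℂ,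
    ∃ C, 0 ≤ C ∧ ∀ ξ t, ‖hatu (fun y => u y) ξ t‖ ≤ C * dcy M ξ * dcy 2 t := by
  induction M with
  | zero =>
    intro u
    obtain ⟨C, hC0, hC⟩ := slice_bound u
    refine ⟨C * ∫ y : Eu m, dcy (m + 1) y,
      mul_nonneg hC0 (integral_nonneg fun y => dcy_nonneg _ _), fun ξ t => ?_⟩
    unfold hatu
    have hi := (integrable_dcy (E := Eu m) volume (m + 1) (by simp))
    refine (norm_integral_le_of_norm_le ((hi.const_mul C).mul_const (dcy 2 t))
      (ae_of_all _ fun y => ?_)).trans (le_of_eq ?_)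
    · rw [norm_mul, norm_cexp_neg_I, one_mul]
      exact hC y t
    · rw [integral_mul_const, integral_const_mul]
      simp [dcy]
  | succ M ih =>
    intro u
    obtain ⟨C, hC0, hC⟩ := ih u
    choose E hE0 hE using fun j : Fin m =>
      ih (LineDeriv.lineDerivOp (snL m (Pi.single j 1)) u : SchwartzMap (Eu (m + 1)) ℂ)
    refine ⟨C + ∑ j, E j, add_nonneg hC0 (Finset.sum_nonneg fun j _ => hE0 j), fun ξ t => ?_⟩
    have h1 : (1 + ‖ξ‖) * ‖hatu (fun y => u y) ξ t‖ ≤ (C + ∑ j, E j) * dcy M ξ * dcy 2 t := by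
      calc (1 + ‖ξ‖) * ‖hatu (fun y => u y) ξ t‖
          ≤ (1 + ∑ j, |ξ j|) * ‖hatu (fun y => u y) ξ t‖ := by
            gcongr; exact norm_le_sum_abs ξ
        _ = ‖hatu (fun y => u y) ξ t‖ + ∑ j, ‖I * (ξ j : ℂ) * hatu (fun y => u y) ξ t‖ := by
            rw [add_mul, one_mul, Finset.sum_mul]
            simp
        _ ≤ C * dcy M ξ * dcy 2 t + ∑ j, E j * dcy M ξ * dcy 2 t := by
            refine add_le_add (hC ξ t) (Finset.sum_le_sum fun j _ => ?_)
            rw [hatu_parts]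
            exact hE j ξ t
        _ = _ := by simp only [add_mul, Finset.sum_mul]
    have hp : 0 < 1 + ‖ξ‖ := by have := norm_nonneg ξ; linarith
    have h2 : dcy (M + 1) ξ = dcy M ξ * (1 + ‖ξ‖)⁻¹ := by
      unfold dcy
      rw [pow_succ, mul_inv]
    rw [h2]
    calc ‖hatu (fun y => u y) ξ t‖ = ((1 + ‖ξ‖) * ‖hatu (fun y => u y) ξ t‖) * (1 + ‖ξ‖)⁻¹ := by
          field_simp
      _ ≤ ((C + ∑ j, E j) * dcy M ξ * dcy 2 t) * (1 + ‖ξ‖)⁻¹ := by gcongr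
      _ = _ := by ring

/-- Decay of the partial Fourier transform against a power of the japanese bracket. -/
lemma jap_hatu {m : ℕ} (D : ℝ) (u : SchwartzMap (Eu (m + 1)) ℂ) :
    ∃ C, 0 ≤ C ∧ ∀ ξ t, jap ξ ^ D * ‖hatu (fun y => u y) ξ t‖ ≤ C * dcy (m + 1) ξ * dcy 2 t := by
  set r := ⌈|D|⌉₊ with hr
  obtain ⟨C, hC0, hC⟩ := hatu_decay (r + (m + 1)) u
  refine ⟨(2 + 2 * m) ^ |D| * C, by positivity, fun ξ t => ?_⟩
  have h1 := peetre D 0 ξ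
  have hp : 1 ≤ 1 + ‖ξ‖ := by have := norm_nonneg ξ; linarith
  have h0 : jap (0 : Eu m) = 1 := by simp [jap]
  rw [zero_add, h0, Real.one_rpow, mul_one] at h1
  have h2 : (1 + ‖ξ‖) ^ |D| ≤ (1 + ‖ξ‖) ^ r := by
    rw [← Real.rpow_natCast]
    exact Real.rpow_le_rpow_of_exponent_le hp (Nat.le_ceil _)
  have hd := dcy_nonneg 2 t
  have hd' := dcy_nonneg (r + (m + 1)) ξ
  calc jap ξ ^ D * ‖hatu (fun y => u y) ξ t‖
      ≤ ((2 + 2 * m) ^ |D| * (1 + ‖ξ‖) ^ r) * (C * dcy (r + (m + 1)) ξ * dcy 2 t) := by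
        refine mul_le_mul (h1.trans ?_) (hC ξ t) (norm_nonneg _) (by positivity)
        gcongr
    _ = _ := by
        unfold dcy
        rw [pow_add (1 + ‖ξ‖) r (m + 1)]
        field_simp

lemma jap_hatu_int {m : ℕ} (D : ℝ) (u : SchwartzMap (Eu (m + 1)) ℂ) (t : ℝ) :
    Integrable fun ξ : Eu m => ((jap ξ ^ D : ℝ) : ℂ) * hatu (fun y => u y) ξ t := by
  obtain ⟨C, hC0, hC⟩ := jap_hatu D u
  have hjc : Continuous fun ξ : Eu m => jap ξ ^ D := by
    refine Continuous.rpow_const ?_ fun ξ => Or.inl (jap_pos ξ).ne'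
    unfold jap
    fun_prop
  refine (((integrable_dcy volume (m + 1) (by simp)).const_mul C).mul_const (dcy 2 t)).mono' ?_
    (ae_of_all _ fun ξ => ?_)
  · exact ((Complex.continuous_ofReal.comp hjc).mul ((continuous_hatu u).comp
      (continuous_id.prodMk continuous_const))).aestronglyMeasurable
  · rw [norm_mul, Complex.norm_real, Real.norm_of_nonneg (Real.rpow_nonneg (jap_pos ξ).le D)]
    exact hC ξ t

lemma hatu_int {m : ℕ} (u : SchwartzMap (Eu (m + 1)) ℂ) (t : ℝ) :
    Integrable fun ξ : Eu m => hatu (fun y => u y) ξ t := by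
  simpa using jap_hatu_int 0 u t

/-! ### Pairings over the half-space -/

/-- Lebesgue measure on the half-line. -/
abbrev mup : Measure ℝ := volume.restrict (Set.Ioi (0 : ℝ))

lemma integral_upperH {m : ℕ} (F : Eu (m + 1) → ℂ) :
    ∫ x in upperH m, F x = ∫ p : ℝ × Eu m, F (Fin.snoc p.2 p.1) ∂(mup.prod volume) := by
  have mp := (volume_preserving_piFinSuccAbove (fun _ : Fin (m + 1) => ℝ) (Fin.last m)).symm
  have me := (MeasurableEquiv.piFinSuccAbove (fun _ : Fin (m + 1) => ℝ)
    (Fin.last m)).symm.measurableEmbedding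
  have hs : ∀ p : ℝ × Eu m, (MeasurableEquiv.piFinSuccAbove (fun _ : Fin (m + 1) => ℝ)
      (Fin.last m)).symm p = Fin.snoc (α := fun _ => ℝ) p.2 p.1 := by
    intro p
    exact Fin.insertNth_last' p.1 p.2
  have h1 := mp.setIntegral_preimage_emb me F (upperH m)
  rw [← h1]
  have h2 : (MeasurableEquiv.piFinSuccAbove (fun _ : Fin (m + 1) => ℝ) (Fin.last m)).symm ⁻¹'
      upperH m = Set.Ioi (0 : ℝ) ×ˢ (Set.univ : Set (Eu m)) := by
    ext p
    rw [Set.mem_preimage, hs]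
    simp [upperH]
  have h3 : mup.prod (volume : Measure (Eu m)) =
      (volume : Measure (ℝ × Eu m)).restrict (Set.Ioi (0 : ℝ) ×ˢ Set.univ) := by
    have := Measure.prod_restrict (μ := (volume : Measure ℝ)) (ν := (volume : Measure (Eu m)))
      (Set.Ioi 0) Set.univ
    rw [Measure.restrict_univ] at this
    exact this
  rw [h2, h3]
  simp only [hs]

/-- Fubini for continuous kernels dominated by an integrable product. -/
lemma fubini4 {m : ℕ} {K : ℝ → ℝ → Eu m → Eu m → ℂ} {C : ℝ}
    (hK : Continuous fun p : (ℝ × ℝ) × (Eu m × Eu m) => K p.1.1 p.1.2 p.2.1 p.2.2)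
    (hb : ∀ s t y ξ, ‖K s t y ξ‖ ≤ C * (dcy 2 s * dcy 2 t * (dcy (m + 1) y * dcy (m + 1) ξ))) :
    ∫ p : ℝ × Eu m, (∫ ξ, ∫ t, K p.1 t p.2 ξ ∂mup) ∂(mup.prod volume) =
        ∫ s, ∫ t, (∫ Q : Ph m, K s t Q.1 Q.2) ∂mup ∂mup ∧
      Integrable (fun p : ℝ × ℝ => ∫ Q : Ph m, K p.1 p.2 Q.1 Q.2) (mup.prod mup) := by
  have ha : Integrable (dcy (m + 1) : Eu m → ℝ) volume := integrable_dcy _ _ (by simp)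
  have hbb : Integrable (dcy 2 : ℝ → ℝ) mup := (integrable_dcy volume 2 (by simp)).restrict
  have haa : Integrable (fun Q : Ph m => dcy (m + 1) Q.1 * dcy (m + 1) Q.2) := ha.mul_prod ha
  have hn2 := fun s : ℝ => dcy_nonneg 2 s
  have hnm := fun s : Eu m => dcy_nonneg (m + 1) s
  have hKc : ∀ {X : Type} [TopologicalSpace X] {a b : X → ℝ} {y ξ : X → Eu m}, Continuous a →
      Continuous b → Continuous y → Continuous ξ →
      Continuous fun x => K (a x) (b x) (y x) (ξ x) := fun h1 h2 h3 h4 =>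
    hK.comp ((h1.prodMk h2).prodMk (h3.prodMk h4))
  set Ib := ∫ t, dcy 2 t ∂mup
  set Ia := ∫ y : Eu m, dcy (m + 1) y
  have hB : ∀ s y ξ, ‖∫ t, K s t y ξ ∂mup‖ ≤
      (C * dcy 2 s * Ib) * (dcy (m + 1) y * dcy (m + 1) ξ) := by
    intro s y ξ
    refine (norm_integral_le_of_norm_le (hbb.const_mul (C * dcy 2 s * (dcy (m + 1) y *
      dcy (m + 1) ξ))) (ae_of_all _ fun t => (hb s t y ξ).trans (le_of_eq (by ring)))).trans
      (le_of_eq ?_)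
    rw [integral_const_mul]
    ring
  have hBm : StronglyMeasurable fun p : (ℝ × Eu m) × Eu m => ∫ t, K p.1.1 t p.1.2 p.2 ∂mup := by
    refine StronglyMeasurable.integral_prod_right' (ν := mup)
      (f := fun q : ((ℝ × Eu m) × Eu m) × ℝ => K q.1.1.1 q.2 q.1.1.2 q.1.2) ?_
    exact (hKc (by fun_prop) (by fun_prop) (by fun_prop) (by fun_prop)).stronglyMeasurable
  have hA : Integrable (fun p : ℝ × Eu m => ∫ ξ, ∫ t, K p.1 t p.2 ξ ∂mup) (mup.prod volume) := by
    have h1 : Integrable (fun p : ℝ × Eu m => dcy 2 p.1 * dcy (m + 1) p.2) (mup.prod volume) :=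
      hbb.mul_prod ha
    refine (h1.const_mul (C * Ib * Ia)).mono'
      (StronglyMeasurable.integral_prod_right' (ν := volume) hBm).aestronglyMeasurable
      (ae_of_all _ fun p => ?_)
    refine (norm_integral_le_of_norm_le (ha.const_mul (C * dcy 2 p.1 * Ib * dcy (m + 1) p.2))
      (ae_of_all _ fun ξ => (hB p.1 p.2 ξ).trans (le_of_eq (by ring)))).trans (le_of_eq ?_)
    rw [integral_const_mul]
    ring
  refine ⟨?_, ?_⟩
  · rw [integral_prod _ hA]
    congr 1
    funext s
    have hBi : Integrable (fun Q : Eu m × Eu m => ∫ t, K s t Q.1 Q.2 ∂mup)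
        ((volume : Measure (Eu m)).prod volume) := by
      refine (haa.const_mul (C * dcy 2 s * Ib)).mono' ?_ (ae_of_all _ fun Q => hB s Q.1 Q.2)
      refine (StronglyMeasurable.integral_prod_right' (ν := mup)
        (f := fun q : (Eu m × Eu m) × ℝ => K s q.2 q.1.1 q.1.2) ?_).aestronglyMeasurable
      exact (hKc (by fun_prop) (by fun_prop) (by fun_prop) (by fun_prop)).stronglyMeasurable
    rw [integral_integral (f := fun y ξ => ∫ t, K s t y ξ ∂mup) hBi]
    refine integral_integral_swap (f := fun (Q : Eu m × Eu m) t => K s t Q.1 Q.2) ?_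
    have h1 := haa.mul_prod hbb
    refine (h1.const_mul (C * dcy 2 s)).mono' ?_ (ae_of_all _ fun q =>
      (hb s q.2 q.1.1 q.1.2).trans (le_of_eq (by ring)))
    exact (hKc (by fun_prop) (by fun_prop) (by fun_prop) (by fun_prop)).aestronglyMeasurable
  · have h1 := hbb.mul_prod hbb
    refine (h1.const_mul (C * ∫ Q : Ph m, dcy (m + 1) Q.1 * dcy (m + 1) Q.2)).mono' ?_
      (ae_of_all _ fun p => ?_)
    · refine (StronglyMeasurable.integral_prod_right' (ν := (volume : Measure (Ph m)))
        (f := fun q : (ℝ × ℝ) × Ph m => K q.1.1 q.1.2 q.2.1 q.2.2) ?_).aestronglyMeasurable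
      exact hK.stronglyMeasurable
    · refine (norm_integral_le_of_norm_le (haa.const_mul (C * (dcy 2 p.1 * dcy 2 p.2)))
        (ae_of_all _ fun Q => (hb p.1 p.2 Q.1 Q.2).trans (le_of_eq (by ring)))).trans (le_of_eq ?_)
      rw [integral_const_mul]
      ring

/-- The integrand of the pairing of `OPG g u` with `v`; the normal variables of the kernel are
clamped to `[0,∞)` to make it continuous everywhere. -/
def KK {m : ℕ} (G : Ee m → ℂ) (u v : Eu (m + 1) → ℂ) (s t : ℝ) (y ξ : Eu m) : ℂ :=
  cexp (I * (dotp y ξ : ℂ)) * G (((y, max s 0), max t 0), ξ) *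
    (hatu u ξ t * (starRingEnd ℂ) (v (Fin.snoc y s)))

lemma KK_continuous {m : ℕ} {G : Ee m → ℂ} (hG : Smo G) (u v : SchwartzMap (Eu (m + 1)) ℂ) :
    Continuous fun p : (ℝ × ℝ) × (Eu m × Eu m) =>
      KK G (fun y => u y) (fun y => v y) p.1.1 p.1.2 p.2.1 p.2.2 := by
  have h1 : Continuous fun p : (ℝ × ℝ) × (Eu m × Eu m) => hatu (fun y => u y) p.2.2 p.1.2 :=
    Continuous.comp (g := fun q : Eu m × ℝ => hatu (fun y => u y) q.1 q.2)
      (f := fun p : (ℝ × ℝ) × (Eu m × Eu m) => (p.2.2, p.1.2)) (continuous_hatu u) (by fun_prop)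
  have h2 : Continuous fun p : (ℝ × ℝ) × (Eu m × Eu m) => v (Fin.snoc p.2.1 p.1.1) :=
    v.continuous.comp (continuous_snoc (by fun_prop) (by fun_prop))
  unfold KK
  refine (Continuous.mul (by fun_prop) ?_).mul (Continuous.mul ?_ ?_)
  · refine ContinuousOn.comp_continuous (s := Qd m) hG.continuousOn (by fun_prop) fun p => ?_
    exact ⟨le_max_right _ _, le_max_right _ _⟩
  · exact h1
  · exact Complex.continuous_conj.comp h2

lemma KK_bound {m : ℕ} {D : ℝ} {G : Ee m → ℂ} (hG : SGk D G) (u v : SchwartzMap (Eu (m + 1)) ℂ) :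
    ∃ C, ∀ s t y ξ, ‖KK G (fun y => u y) (fun y => v y) s t y ξ‖ ≤
      C * (dcy 2 s * dcy 2 t * (dcy (m + 1) y * dcy (m + 1) ξ)) := by
  obtain ⟨C0, hC0⟩ := hG.xb0.2 []
  simp only [List.map_nil, ddL, List.foldr_nil, pow_zero, one_mul] at hC0
  obtain ⟨C1, hC1n, hC1⟩ := jap_hatu D u
  obtain ⟨C2, hC2n, hC2⟩ := slice_bound v
  refine ⟨|C0| * C1 * C2, fun s t y ξ => ?_⟩
  have h1 := hC0 (((y, max s 0), max t 0), ξ) ⟨le_max_right _ _, le_max_right _ _⟩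
  have hj := Real.rpow_nonneg (jap_pos ξ).le D
  unfold KK
  rw [norm_mul, norm_mul, norm_mul, norm_cexp_I, one_mul, RCLike.norm_conj]
  have := dcy_nonneg 2 t
  have := dcy_nonneg (m + 1) ξ
  calc ‖G (((y, max s 0), max t 0), ξ)‖ * (‖hatu (fun y => u y) ξ t‖ * ‖v (Fin.snoc y s)‖)
      ≤ (|C0| * jap ξ ^ D) * (‖hatu (fun y => u y) ξ t‖ * ‖v (Fin.snoc y s)‖) := by
        gcongr
        exact h1.trans (mul_le_mul_of_nonneg_right (le_abs_self _) hj)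
    _ = |C0| * (jap ξ ^ D * ‖hatu (fun y => u y) ξ t‖) * ‖v (Fin.snoc y s)‖ := by ring
    _ ≤ |C0| * (C1 * dcy (m + 1) ξ * dcy 2 t) * (C2 * dcy (m + 1) y * dcy 2 s) := by
        refine mul_le_mul (mul_le_mul_of_nonneg_left (hC1 ξ t) (abs_nonneg _)) (hC2 y s)
          (norm_nonneg _) (by positivity)
    _ = _ := by ring

/-- The `L²` pairing of `OPG g u` with `v`, as an iterated integral whose outer variables are the
normal ones. -/
lemma opg_pair {m : ℕ} {D : ℝ} {g : Eu m → ℝ → ℝ → Eu m → ℂ} (hG : SGk D (unc g))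
    (u v : SchwartzMap (Eu (m + 1)) ℂ) :
    ∫ x in upperH m, OPG g (fun y => u y) x * (starRingEnd ℂ) (v x) =
      (((2 * Real.pi) ^ m : ℝ) : ℂ)⁻¹ * ∫ s, ∫ t, (∫ Q : Ph m,
        KK (unc g) (fun y => u y) (fun y => v y) s t Q.1 Q.2) ∂mup ∂mup := by
  obtain ⟨C, hC⟩ := KK_bound hG u v
  rw [← (fubini4 (KK_continuous hG.1 u v) hC).1, ← integral_const_mul, integral_upperH]
  have hpos : ∀ᵐ p : ℝ × Eu m ∂(mup.prod volume), 0 < p.1 :=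
    Measure.quasiMeasurePreserving_fst.ae (ae_restrict_mem measurableSet_Ioi)
  refine integral_congr_ae (hpos.mono fun p hp => ?_)
  simp only [OPG, Fin.init_snoc, Fin.snoc_last]
  rw [Complex.real_smul, mul_assoc, Complex.ofReal_inv, ← integral_mul_const]
  congr 2
  funext ξ
  rw [← integral_mul_const]
  refine setIntegral_congr_fun measurableSet_Ioi fun t ht => ?_
  simp only [KK, unc, max_eq_left hp.le, max_eq_left (le_of_lt (Set.mem_Ioi.1 ht))]
  ring

lemma T0_const {m : ℕ} (c : ℂ) (σ : Ph m → ℂ) (G : Ee m → ℂ) (z : Ee m) :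
    T0 (fun P => c * σ P) G z = c * T0 σ G z := by
  have h : ∀ W, AA (fun P => c * σ P) G W z = c * AA σ G W z := by
    intro W
    unfold AA
    rw [← integral_const_mul]
    refine integral_congr_ae (ae_of_all _ fun P => ?_)
    ring
  unfold T0
  rw [← integral_const_mul]
  refine integral_congr_ae (ae_of_all _ fun W => ?_)
  simp only [h]
  ring

lemma hatu_slice_cont {m : ℕ} (u : SchwartzMap (Eu (m + 1)) ℂ) (t : ℝ) :
    Continuous (pF fun y : Eu m => u (Fin.snoc y t)) := by
  have h : Continuous fun ξ : Eu m => hatu (fun y => u y) ξ t :=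
    Continuous.comp (g := fun q : Eu m × ℝ => hatu (fun y => u y) q.1 q.2)
      (f := fun ξ => (ξ, t)) (continuous_hatu u) (by fun_prop)
  exact h

/-- For fixed positive normal variables, the two pairings agree after integration over the
tangential variables. This is `adj_core` for the slices `u(·, t)` and `v(·, s)`. -/
lemma KK_adj {m : ℕ} {D : ℝ} {G : Ee m → ℂ} (hG : SGk D G) (u v : SchwartzMap (Eu (m + 1)) ℂ)
    {s t : ℝ} (hs : 0 < s) (ht : 0 < t) :
    (starRingEnd ℂ) (∫ Q : Ph m, KK (cjs (T0 (fun P =>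
        (((2 * Real.pi) ^ m : ℝ) : ℂ)⁻¹ * sig0 m P) G)) (fun y => v y) (fun y => u y) t s Q.1 Q.2) =
      ∫ Q : Ph m, KK G (fun y => u y) (fun y => v y) s t Q.1 Q.2 := by
  have h0 := adj_core hG (f := fun y => u (Fin.snoc y t))
    (h := fun y => v (Fin.snoc y s)) (z0 := (((0, s), t), 0)) ⟨hs.le, ht.le⟩ rfl (slice_cont u t)
    (slice_cont v s) (slice_int u t) (slice_int v s)
    (hatu_slice_cont u t) (hatu_slice_cont v s)
    (hatu_int v s) (jap_hatu_int D u t) (jap_hatu_int D v s)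
    (pF_inversion (slice_cont v s) (slice_int v s) (hatu_int v s))
  have hz : ∀ Q : Ph m, ((((0, s), t), 0) : Ee m) + iota Q = (((Q.1, s), t), Q.2) := by
    intro Q
    simp [iota]
  simp only [hz] at h0
  have h1 : ∀ Q : Ph m, KK G (fun y => u y) (fun y => v y) s t Q.1 Q.2 =
      cexp (I * (dotp Q.1 Q.2 : ℂ)) * G (((Q.1, s), t), Q.2) *
        (pF (fun y => u (Fin.snoc y t)) Q.2 * (starRingEnd ℂ) (v (Fin.snoc Q.1 s))) := by
    intro Q
    simp only [KK, max_eq_left hs.le, max_eq_left ht.le]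
    rfl
  simp only [h1]
  rw [h0, ← integral_conj, ← integral_const_mul]
  congr 1
  funext Q
  simp only [KK, max_eq_left hs.le, max_eq_left ht.le, cjs, swapE_apply, T0_const, map_mul,
    Complex.conj_conj, ← Complex.exp_conj, Complex.conj_I, Complex.conj_ofReal, neg_mul]
  have h2 : hatu (fun y => v y) Q.2 s = pF (fun y => v (Fin.snoc y s)) Q.2 := rfl
  rw [h2]
  ring

/-! ### The adjoint of a singular Green operator -/

/-- The adjoint of a class-0 singular Green operator is again one. -/
theorem statement_17 (m : ℕ) (hm : 1 ≤ m) (d : ℝ)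
    (g : Eu m → ℝ → ℝ → Eu m → ℂ) (hg : InSG d g) :
    ∃ g1 : Eu m → ℝ → ℝ → Eu m → ℂ, InSG d g1 ∧
      ∀ u v : SchwartzMap (Eu (m + 1)) ℂ,
        (∫ x in upperH m, OPG g (fun y => u y) x * (starRingEnd ℂ) (v x)) =
          ∫ x in upperH m, u x * (starRingEnd ℂ) (OPG g1 (fun y => v y) x) := by
  have hG : SGk (d + 1) (unc g) := inSG_iff.1 hg
  set c : ℂ := (((2 * Real.pi) ^ m : ℝ) : ℂ)⁻¹ with hc
  have hσ : Tst (fun P => c * sig0 m P) :=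
    ⟨contDiff_const.mul (tst_sig0 m).1, (tst_sig0 m).2.mul_left⟩
  set G1 : Ee m → ℂ := cjs (T0 (fun P => c * sig0 m P) (unc g)) with hG1
  have hS1 : SGk (d + 1) G1 := (hG.T0 hσ).cjs
  set g1 : Eu m → ℝ → ℝ → Eu m → ℂ := fun x s t ξ => G1 (((x, s), t), ξ) with hg1
  have hu1 : unc g1 = G1 := rfl
  refine ⟨g1, inSG_iff.2 (hu1 ▸ hS1), fun u v => ?_⟩
  -- conjugation turns the right side into a pairing of the form treated by `opg_pair`
  have hR : ∫ x in upperH m, u x * (starRingEnd ℂ) (OPG g1 (fun y => v y) x) =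
      (starRingEnd ℂ) (∫ x in upperH m, OPG g1 (fun y => v y) x * (starRingEnd ℂ) (u x)) := by
    rw [← integral_conj]
    congr 1
    funext x
    rw [map_mul, Complex.conj_conj, mul_comm]
  rw [hR, opg_pair hG u v, opg_pair (g := g1) (hu1 ▸ hS1) v u, map_mul]
  have hcc : (starRingEnd ℂ) ((((2 * Real.pi) ^ m : ℝ) : ℂ)⁻¹) = (((2 * Real.pi) ^ m : ℝ) : ℂ)⁻¹ := by
    rw [map_inv₀, Complex.conj_ofReal]
  rw [hcc]
  congr 1
  -- the roles of the two normal variables are exchanged between the two sides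
  obtain ⟨C, hC⟩ := KK_bound hG u v
  rw [integral_integral_swap (fubini4 (KK_continuous hG.1 u v) hC).2, ← integral_conj]
  refine setIntegral_congr_fun measurableSet_Ioi fun t ht => ?_
  rw [← integral_conj]
  refine setIntegral_congr_fun measurableSet_Ioi fun s hs => ?_
  exact (KK_adj hG u v hs ht).symm

end
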